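/- The commuting variety C is a rational algebraic variety: there exist a dense open subset U of C, a dense open subset V of affine space A^{dim g + rk g}, and an isomorphism of varieties U ≅ V. -/

import Mathlib

noncomputable section

namespace CV

variable (k : Type*) [Field k] (V : Type*) [AddCommGroup V] [Module k V] [FiniteDimensional k V]

/-- Coordinates with respect to a chosen basis of `V`. -/
def coordFn (z : V) (i : Module.Free.ChooseBasisIndex k V) : k :=
  (Module.Free.chooseBasis k V).repr z i

/-- Evaluation of a polynomial (in the chosen coordinates) at a point of `V`. -/
def evalP (F : MvPolynomial (Module.Free.ChooseBasisIndex k V) k) (z : V) : k :=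
  MvPolynomial.aeval (coordFn k V z) F

/-- The Zariski topology on `V`: generated by complements of zero sets of polynomial
functions. -/
def zar : TopologicalSpace V :=
  TopologicalSpace.generateFrom
    {U | ∃ F : MvPolynomial (Module.Free.ChooseBasisIndex k V) k, U = {z | evalP k V F z ≠ 0}}

/-- The dimension of a subset of `V`:  the Krull dimension for the topology induced by the
Zariski topology of `V`. -/
def dimSet (S : Set V) : WithBot ℕ∞ :=
  @topologicalKrullDim S (TopologicalSpace.induced Subtype.val (zar k V))

/-- The differential at `z ∈ V` of a polynomial `F`, as a linear functional on `V`. -/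
def diffAt (F : MvPolynomial (Module.Free.ChooseBasisIndex k V) k) (z : V) : V →ₗ[k] k :=
  (Module.Free.chooseBasis k V).constr k fun i => evalP k V (MvPolynomial.pderiv i F) z

/-- The Zariski tangent space at `z` of a subset `S ⊆ V`:  the common kernel of the
differentials at `z` of all polynomial functions vanishing identically on `S`. -/
def tangent (S : Set V) (z : V) : Submodule k V :=
  ⨅ F ∈ {F | ∀ w ∈ S, evalP k V F w = 0}, LinearMap.ker (diffAt k V F z)

end CV

/-- The commuting variety `C = {(x,y) ∈ g × g | [x,y] = 0}`. -/
def commSet (k : Type*) (g : Type*) [Field k] [LieRing g] [LieAlgebra k g] : Set (g × g) :=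
  {p | ⁅p.1, p.2⁆ = 0}

/-- The centralizer `g_x = {y ∈ g | [x,y] = 0}` of an element `x` of a Lie algebra,
as a submodule. -/
def cent (k : Type*) {g : Type*} [Field k] [LieRing g] [LieAlgebra k g] (x : g) :
    Submodule k g := LinearMap.ker (LieAlgebra.ad k g x)

section

open MvPolynomial
set_option maxHeartbeats 1000000 in
theorem RC_exists_derivation {k F β : Type*} [Field k] [CharZero k] [Field F] [Algebra k F] {c : β → F}
    (hc : AlgebraicIndependent k c) (v : β → F) :
    ∃ D : Derivation k F F, ∀ b, D (c b) = v b := by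
  classical
  obtain ⟨s, hs, hsb⟩ := exists_isTranscendenceBasis_superset (R := k) (A := F)
    (s := Set.range c) (hc.to_subtype_range)
  let S := MvPolynomial s k
  let φ : S →ₐ[k] F := aeval (Subtype.val : s → F)
  have hφ : Function.Injective φ := hsb.1
  let : Algebra S F := φ.toRingHom.toAlgebra
  have : IsScalarTower k S F := IsScalarTower.of_algebraMap_eq' φ.comp_algebraMap.symm
  have : FaithfulSMul S F := (faithfulSMul_iff_algebraMap_injective _ _).2 hφ
  have : CharZero F := charZero_of_injective_algebraMap (algebraMap k F).injective
  let K := FractionRing S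
  let : Algebra K F := FractionRing.liftAlgebra S F
  have : IsScalarTower S K F := inferInstance
  have hSalg : Algebra.IsAlgebraic S F := by
    have h1 := hsb.isAlgebraic
    rw [Subtype.range_val] at h1
    have hm : ∀ z : S, φ z ∈ Algebra.adjoin k s := fun z => by
      have := Algebra.adjoin_range_eq_range_aeval k (Subtype.val : s → F)
      rw [Subtype.range_val] at this
      rw [this]; exact ⟨z, rfl⟩
    refine Algebra.IsAlgebraic.of_ringHom_of_comp_eq (S := Algebra.adjoin k s) (B := F)
      (φ.toRingHom.codRestrict (Algebra.adjoin k s) hm) (RingHom.id F) ?_ Function.injective_id ?_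
    · rintro ⟨z, hz⟩
      have := Algebra.adjoin_range_eq_range_aeval k (Subtype.val : s → F)
      rw [Subtype.range_val] at this
      rw [this] at hz
      obtain ⟨w, hw⟩ := hz
      exact ⟨w, Subtype.ext hw⟩
    · rfl
  have : CharZero K := charZero_of_injective_algebraMap (R := S) (IsFractionRing.injective S K)
  have : Algebra.IsAlgebraic K F := (IsFractionRing.comap_isAlgebraic_iff (A := S) (K := K) (C := F)).1 hSalg
  have : Algebra.FormallyEtale K F := Algebra.FormallyEtale.of_isSeparable K F
  have : Algebra.FormallyEtale S K := Algebra.FormallyEtale.of_isLocalization (nonZeroDivisors S)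
  have : Algebra.FormallyEtale S F := Algebra.FormallyEtale.comp S K F
  let w : s → F := fun a => if h : ∃ b, c b = a then v h.choose else 0
  let d : Derivation k S F := MvPolynomial.mkDerivation k w
  let l : TensorProduct S F (Ω[S⁄k]) →ₗ[F] F := (d.liftKaehlerDifferential).liftBaseChange F
  let l' : Ω[F⁄k] →ₗ[F] F := l ∘ₗ (KaehlerDifferential.tensorKaehlerEquivOfFormallyEtale k S F).symm.toLinearMap
  refine ⟨l'.compDer (KaehlerDifferential.D k F), fun b => ?_⟩
  have hb : c b = algebraMap S F (X ⟨c b, hs ⟨b, rfl⟩⟩) := by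
    have h2 : algebraMap S F = φ.toRingHom := rfl
    rw [h2]
    have h3 : φ (X ⟨c b, hs ⟨b, rfl⟩⟩) = c b := aeval_X _ _
    exact h3.symm
  have h1 : l'.compDer (KaehlerDifferential.D k F) (c b) = w ⟨c b, hs ⟨b, rfl⟩⟩ := by
    conv_lhs => rw [hb]
    change l ((KaehlerDifferential.tensorKaehlerEquivOfFormallyEtale k S F).symm
      (KaehlerDifferential.D k F _)) = _
    rw [KaehlerDifferential.tensorKaehlerEquivOfFormallyEtale_symm_D_algebraMap]
    simp only [l, LinearMap.liftBaseChange_tmul, one_smul, Derivation.liftKaehlerDifferential_comp_D]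
    exact mkDerivation_X _ _ _
  rw [h1]
  have hex : ∃ b', c b' = ((⟨c b, hs ⟨b, rfl⟩⟩ : s) : F) := ⟨b, rfl⟩
  simp only [w]
  rw [dif_pos hex]
  congr 1
  exact hc.injective hex.choose_spec
universe u v w

theorem RC_optionEquivLeft_aeval {k : Type u} {F : Type v} {σ : Type w} [Field k] [Field F] [Algebra k F]
    (c : Option σ → F) (p : MvPolynomial (Option σ) k) :
    Polynomial.eval₂ (aeval (fun i => c (some i)) : MvPolynomial σ k →ₐ[k] F).toRingHom (c none)
      (optionEquivLeft k σ p) = aeval c p := by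
  induction p using MvPolynomial.induction_on with
  | C a => simp
  | add p q hp hq => simp only [map_add, Polynomial.eval₂_add, hp, hq]
  | mul_X p i hp =>
    rw [map_mul, Polynomial.eval₂_mul, hp, map_mul]
    congr 1
    cases i <;> simp

theorem RC_optionEquivLeft_rename {k : Type u} {β σ : Type w} [Field k] (j : β → σ)
    (p : MvPolynomial (Option β) k) :
    optionEquivLeft k σ (rename (Option.map j) p)
      = (optionEquivLeft k β p).map (rename j : MvPolynomial β k →ₐ[k] _).toRingHom := by
  induction p using MvPolynomial.induction_on with
  | C a => simp
  | add p q hp hq => simp only [map_add, Polynomial.map_add, hp, hq]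
  | mul_X p i hp =>
    rw [map_mul, map_mul, map_mul, Polynomial.map_mul, hp]
    congr 1
    cases i <;> simp

theorem RC_height_bound {k : Type u} {F : Type v} [Field k] [Field F] [Algebra k F]
    (σ : Type w) [Finite σ] : ∀ (c : σ → F),
    ∃ (β : Type w) (_ : Finite β) (j : β → σ), AlgebraicIndependent k (fun b => c (j b)) ∧
      (Nat.card σ : ℕ∞) ≤ Nat.card β + (RingHom.ker (aeval c : MvPolynomial σ k →ₐ[k] F)).height := by
  induction σ using Finite.induction_empty_option with
  | of_equiv e H =>
    intro c
    rename_i α σ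
    obtain ⟨β, hβ, j, hj, hle⟩ := H (c ∘ e)
    refine ⟨β, hβ, e ∘ j, hj, ?_⟩
    rw [← Nat.card_congr e]
    refine hle.trans (add_le_add le_rfl (le_of_eq ?_))
    have : RingHom.ker (aeval (c ∘ e) : MvPolynomial α k →ₐ[k] F)
      = (RingHom.ker (aeval c : MvPolynomial σ k →ₐ[k] F)).comap (renameEquiv k e).toRingEquiv := by
      ext p
      simp [RingHom.mem_ker, Ideal.mem_comap, aeval_rename]
    rw [this]
    exact RingEquiv.height_comap _ _
  | h_empty =>
    intro c
    refine ⟨PEmpty, inferInstance, PEmpty.elim, ?_, by simp⟩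
    exact algebraicIndependent_empty_type_iff.2 (algebraMap k F).injective
  | h_option H =>
    intro c
    rename_i σ _
    obtain ⟨β, hβ, j, hj, hle⟩ := H (fun i => c (some i))
    let A := MvPolynomial σ k
    let ψ : A →ₐ[k] F := aeval (fun i => c (some i))
    let Ψ : Polynomial A →+* F := Polynomial.eval₂RingHom ψ.toRingHom (c none)
    let q : Ideal A := RingHom.ker ψ
    let P : Ideal (Polynomial A) := RingHom.ker Ψ
    have hq : q.IsPrime := RingHom.ker_isPrime _
    have hP : P.IsPrime := RingHom.ker_isPrime _
    have hPq : P.LiesOver q := ⟨by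
      ext a
      simp [q, P, Ideal.under, Ψ, RingHom.mem_ker, Ideal.mem_comap]⟩
    have hht : (RingHom.ker (aeval c : MvPolynomial (Option σ) k →ₐ[k] F)).height = P.height := by
      have : RingHom.ker (aeval c : MvPolynomial (Option σ) k →ₐ[k] F)
        = P.comap (optionEquivLeft k σ).toRingEquiv := by
        ext p
        have := RC_optionEquivLeft_aeval (k := k) c p
        simp only [RingHom.mem_ker, Ideal.mem_comap, P, Ψ, Polynomial.coe_eval₂RingHom, ψ]
        erw [this]
      rw [this]
      exact RingEquiv.height_comap _ _
    have hcard : (Nat.card (Option σ) : ℕ∞) = Nat.card σ + 1 := by simp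
    rw [hht, hcard]
    have hge : q.height ≤ P.height := by
      rw [Ideal.height_eq_height_add_of_liesOver_of_hasGoingDown q P]
      exact le_self_add
    by_cases hind : AlgebraicIndependent k (fun b => c (Option.map j b))
    · refine ⟨Option β, inferInstance, Option.map j, hind, ?_⟩
      have : (Nat.card (Option β) : ℕ∞) = Nat.card β + 1 := by simp
      rw [this]
      calc _ ≤ (Nat.card β + q.height) + 1 := add_le_add hle le_rfl
        _ ≤ (Nat.card β + P.height) + 1 := by gcongr
        _ = _ := by ring
    · refine ⟨β, hβ, some ∘ j, hj, ?_⟩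
      let q' : Ideal (Polynomial A) := q.map Polynomial.C
      have hq' : q'.IsPrime := Ideal.isPrime_map_C_of_isPrime
      have hq'q : q'.LiesOver q := ⟨by
        ext a
        change a ∈ q ↔ Polynomial.C a ∈ q.map Polynomial.C
        rw [Ideal.mem_map_C_iff]
        constructor
        · intro h n
          rw [Polynomial.coeff_C]
          split_ifs
          · exact h
          · exact zero_mem _
        · intro h
          simpa using h 0⟩
      have h1 : q.height ≤ q'.height := by
        rw [Ideal.height_eq_height_add_of_liesOver_of_hasGoingDown q q']
        exact le_self_add
      have hle' : q' ≤ P := by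
        rw [Ideal.map_le_iff_le_comap]
        intro a ha
        have ha' : ψ a = 0 := ha
        simpa [P, Ψ, RingHom.mem_ker, Ideal.mem_comap] using ha'
      have hlt : q' < P := by
        refine lt_of_le_of_ne hle' fun heq => hind ?_
        rw [algebraicIndependent_iff]
        intro p hp
        have hpP : optionEquivLeft k σ (rename (Option.map j) p) ∈ P := by
          have := RC_optionEquivLeft_aeval (k := k) c (rename (Option.map j) p)
          simp only [RingHom.mem_ker, P, Ψ, Polynomial.coe_eval₂RingHom, ψ]
          erw [this]
          rw [aeval_rename]; exact hp
        rw [← heq, RC_optionEquivLeft_rename, Ideal.mem_map_C_iff] at hpP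
        have : optionEquivLeft k β p = 0 := by
          ext1 n
          have h2 := hpP n
          rw [Polynomial.coeff_map] at h2
          have h3 : aeval (fun b => c (some (j b))) ((optionEquivLeft k β p).coeff n) = 0 := by
            have h4 : ψ (rename j ((optionEquivLeft k β p).coeff n)) = 0 := h2
            rw [aeval_rename] at h4
            exact h4
          rw [Polynomial.coeff_zero]
          exact (algebraicIndependent_iff.1 hj) _ h3
        exact (optionEquivLeft k β).injective (by rw [this, map_zero])
      have h2 : q'.height + 1 ≤ P.height := by
        exact Ideal.height_add_one_le_of_lt_of_isPrime hlt
      calc _ ≤ (Nat.card β + q.height) + 1 := add_le_add hle le_rfl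
        _ = Nat.card β + (q.height + 1) := by ring
        _ ≤ Nat.card β + (q'.height + 1) := by gcongr
        _ ≤ _ := by gcongr

/-- The evaluation of derivations on a family of elements. -/
def RCder (k F : Type*) {σ : Type*} [Field k] [Field F] [Algebra k F] (c : σ → F) :
    Derivation k F F →ₗ[F] (σ → F) where
  toFun D := fun i => D (c i)
  map_add' D D' := by ext; simp
  map_smul' a D := by ext; simp

theorem RC_theta_dim {k : Type u} {F : Type v} [Field k] [CharZero k] [Field F] [Algebra k F]
    (σ : Type w) [Finite σ] (c : σ → F) :
    (Nat.card σ : ℕ∞) ≤ Module.finrank F (LinearMap.range (RCder k F c)) +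
      (RingHom.ker (aeval c : MvPolynomial σ k →ₐ[k] F)).height := by
  obtain ⟨β, hβ, j, hj, hle⟩ := RC_height_bound (k := k) σ c
  refine hle.trans (add_le_add ?_ le_rfl)
  have := Fintype.ofFinite β
  let π : LinearMap.range (RCder k F c) →ₗ[F] (β → F) :=
    (LinearMap.funLeft F F j) ∘ₗ (Submodule.subtype _)
  have hπ : Function.Surjective π := by
    intro v
    obtain ⟨D, hD⟩ := RC_exists_derivation hj v
    exact ⟨⟨_, D, rfl⟩, funext hD⟩
  have := LinearMap.finrank_le_finrank_of_surjective hπ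
  rw [Module.finrank_fintype_fun_eq_card, ← Nat.card_eq_fintype_card] at this
  exact_mod_cast this

end

section

universe u v w

theorem RC_exists_li {K V J : Type*} [Field K] [AddCommGroup V] [Module K V] [FiniteDimensional K V]
    (v : J → V) {m : ℕ} (hm : Module.finrank K (Submodule.span K (Set.range v)) = m) :
    ∃ a : Fin m → J,
      LinearIndependent K (v ∘ a) := by
  obtain ⟨κ, a, ha, hsp, hli⟩ := exists_linearIndependent' K v
  have : Finite κ := hli.finite
  have := Fintype.ofFinite κ
  have hc : Fintype.card κ = m := by
    rw [← hm, ← hsp]; exact (finrank_span_eq_card hli).symm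
  let e := (Fintype.equivFinOfCardEq hc).symm
  exact ⟨a ∘ e, (linearIndependent_equiv e).2 hli⟩

theorem RC_exists_minor {K J ι : Type*} [Field K] [Fintype ι] (M : J → ι → K) {m : ℕ}
    (hm : Module.finrank K (Submodule.span K (Set.range M)) = m) :
    ∃ (a : Fin m → J) (b : Fin m → ι),
      (Matrix.of fun i j => M (a i) (b j)).det ≠ 0 := by
  obtain ⟨a, ha⟩ := RC_exists_li (K := K) M hm
  let N : Matrix (Fin m) ι K := Matrix.of fun i l => M (a i) l
  have hN : N.rank = m := by
    have : LinearIndependent K N.row := ha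
    simpa using this.rank_matrix
  have hN' : Module.finrank K (Submodule.span K (Set.range N.col)) = m := by
    rw [← Matrix.rank_eq_finrank_span_cols, hN]
  obtain ⟨b, hb⟩ := RC_exists_li (K := K) N.col hN'
  refine ⟨a, b, ?_⟩
  have h2 : LinearIndependent K (Matrix.of fun i j => M (a i) (b j)).col := hb
  rw [Matrix.linearIndependent_cols_iff_isUnit, Matrix.isUnit_iff_isUnit_det] at h2
  exact h2.ne_zero

theorem RC_krull {R F : Type*} [CommRing R] [IsNoetherianRing R] [Field F] {ι J : Type*} [Fintype ι]
    (f : ι → R) (p : Ideal R) (hp : p ∈ (Ideal.span (Set.range f)).minimalPrimes)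
    (θ : R →+* F) (hθ : RingHom.ker θ = p) (G : J → ι → R) (hG : ∀ j, ∑ l, G j l * f l = 0) :
    p.height + Module.finrank F (Submodule.span F (Set.range fun j l => θ (G j l)))
      ≤ Fintype.card ι := by
  classical
  obtain ⟨m, hm⟩ : ∃ m, Module.finrank F (Submodule.span F (Set.range fun j l => θ (G j l))) = m :=
    ⟨_, rfl⟩
  obtain ⟨a, b, hab⟩ := RC_exists_minor (fun j l => θ (G j l)) hm
  rw [hm]
  let N : Matrix (Fin m) (Fin m) R := Matrix.of fun i j => G (a i) (b j)
  have hμ : N.det ∉ p := by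
    rw [← hθ, RingHom.mem_ker, RingHom.map_det]
    exact hab
  have hbinj : Function.Injective b := by
    intro i j hij
    by_contra hne
    exact hab (Matrix.det_zero_of_column_eq hne (fun r => by simp [hij]))
  let T : Finset ι := (Finset.univ.image b)ᶜ
  have hT : T.card + m = Fintype.card ι := by
    have : (Finset.univ.image b).card = m := by
      rw [Finset.card_image_of_injective _ hbinj]; simp
    rw [← this]
    exact Finset.card_compl_add_card _
  let I' : Ideal R := Ideal.span (T.image f : Finset R)
  have hsum : ∀ i, ∑ j, N i j * f (b j) ∈ I' := by
    intro i
    have h1 := hG (a i)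
    rw [← Finset.sum_add_sum_compl (Finset.univ.image b), Finset.sum_image hbinj.injOn] at h1
    have h2 : ∑ j, N i j * f (b j) = - ∑ l ∈ T, G (a i) l * f l := eq_neg_of_add_eq_zero_left h1
    rw [h2]
    refine neg_mem (Ideal.sum_mem _ fun l hl => Ideal.mul_mem_left _ _ (Ideal.subset_span ?_))
    exact Finset.mem_coe.2 (Finset.mem_image_of_mem f hl)
  have hmem : ∀ j, N.det * f (b j) ∈ I' := by
    intro j
    have h1 : (N.adjugate.mulVec (N.mulVec (f ∘ b))) j = N.det * f (b j) := by
      rw [Matrix.mulVec_mulVec, Matrix.adjugate_mul, Matrix.smul_mulVec, Matrix.one_mulVec]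
      rfl
    rw [← h1]
    exact Ideal.sum_mem I' (t := Finset.univ) (f := fun i => N.adjugate j i * ∑ l, N i l * f (b l))
      fun i _ => Ideal.mul_mem_left I' _ (hsum i)
  have hmin : p ∈ I'.minimalPrimes := by
    refine ⟨⟨hp.1.1, le_trans (Ideal.span_mono ?_) hp.1.2⟩, ?_⟩
    · intro z hz
      obtain ⟨l, _, rfl⟩ := Finset.mem_image.1 (Finset.mem_coe.1 hz)
      exact ⟨l, rfl⟩
    · rintro q ⟨hq, hIq⟩ hqp
      refine hp.2 ⟨hq, ?_⟩ hqp
      rw [Ideal.span_le]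
      rintro _ ⟨l, rfl⟩
      by_cases hl : l ∈ Finset.univ.image b
      · obtain ⟨j, _, rfl⟩ := Finset.mem_image.1 hl
        exact (hq.mem_or_mem (hIq (hmem j))).resolve_left fun h => hμ (hqp h)
      · exact hIq (Ideal.subset_span (Finset.mem_coe.2 (Finset.mem_image_of_mem f (Finset.mem_compl.2 hl))))
  have h := Ideal.height_le_card_of_mem_minimalPrimes_span_finset hmin
  have h3 : p.height ≤ (T.card : ℕ∞) := h.trans (by exact_mod_cast Finset.card_image_le)
  rw [← hT]
  push_cast
  gcongr

end

section

universe u v w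

theorem RC_trace_mapQ {F : Type u} {V : Type v} [Field F] [AddCommGroup V] [Module F V]
    [FiniteDimensional F V] (v : V) (hv : v ≠ 0) (f : Module.End F V) (c : F) (hc : f v = c • v)
    (hW : (F ∙ v) ≤ (F ∙ v).comap f) :
    LinearMap.trace F V f = c + LinearMap.trace F (V ⧸ (F ∙ v)) ((F ∙ v).mapQ (F ∙ v) f hW) := by
  obtain ⟨l, hl⟩ : ∃ l : Module.Dual F V, l v = 1 := Module.Projective.exists_dual_eq_one F hv
  let W := F ∙ v
  obtain ⟨s, hs⟩ := (W.mkQ).exists_rightInverse_of_surjective (by simp)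
  let s' : (V ⧸ W) →ₗ[F] V := s - (l ∘ₗ s).smulRight v
  have hv0 : W.mkQ v = 0 := by simp [W]
  have hs' : W.mkQ ∘ₗ s' = LinearMap.id := by
    rw [← hs]
    apply LinearMap.ext; intro x
    simp only [s', LinearMap.comp_apply, LinearMap.sub_apply, LinearMap.smulRight_apply, map_sub, map_smul, hv0,
      smul_zero, sub_zero]
  have hid : s' ∘ₗ W.mkQ + l.smulRight v = LinearMap.id := by
    ext x
    have h1 : x - s' (W.mkQ x) ∈ W := by
      suffices h : W.mkQ (x - s' (W.mkQ x)) = 0 from (Submodule.Quotient.mk_eq_zero W).1 h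
      rw [map_sub]
      have := LinearMap.congr_fun hs' (W.mkQ x)
      simp only [LinearMap.comp_apply, LinearMap.id_apply] at this
      rw [this, sub_self]
    obtain ⟨d, hd⟩ := Submodule.mem_span_singleton.1 h1
    have h2 : l (s' (W.mkQ x)) = 0 := by simp [s', hl]
    have h3 : d = l x := by
      have := congrArg l hd
      rw [map_sub, h2, map_smul, hl] at this
      simpa using this
    simp only [LinearMap.add_apply, LinearMap.comp_apply, LinearMap.smulRight_apply, LinearMap.id_apply]
    rw [← h3, hd]; abel
  have h4 : f = (f ∘ₗ s') ∘ₗ W.mkQ + l.smulRight (f v) := by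
    conv_lhs => rw [← LinearMap.comp_id f, ← hid]
    ext x; simp
  have h5 : W.mkQ ∘ₗ (f ∘ₗ s') = W.mapQ W f hW := by
    have : W.mapQ W f hW = W.mapQ W f hW ∘ₗ (W.mkQ ∘ₗ s') := by rw [hs', LinearMap.comp_id]
    rw [this, ← LinearMap.comp_assoc, ← LinearMap.comp_assoc, W.mapQ_mkQ]
  conv_lhs => rw [h4, map_add, LinearMap.trace_comp_comm', h5, LinearMap.trace_smulRight, hc, map_smul, hl]
  rw [smul_eq_mul, mul_one, add_comm]

theorem RC_common_eigenvector {F : Type u} {V : Type v} [Field F] [IsAlgClosed F] [AddCommGroup V]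
    [Module F V] [FiniteDimensional F V] [Nontrivial V] (A Z : Module.End F V) (h : Commute A Z) :
    ∃ v : V, v ≠ 0 ∧ (∃ a : F, A v = a • v) ∧ (∃ b : F, Z v = b • v) := by
  obtain ⟨a, ha⟩ := Module.End.exists_eigenvalue A
  have hm : Set.MapsTo Z (A.eigenspace a) (A.eigenspace a) :=
    Module.End.mapsTo_genEigenspace_of_comm h a 1
  have hnt : Nontrivial (A.eigenspace a) := (Submodule.nontrivial_iff_ne_bot).2 ha
  obtain ⟨b, hb⟩ := Module.End.exists_eigenvalue (Z.restrict hm)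
  obtain ⟨w, hw⟩ := hb.exists_hasEigenvector
  refine ⟨w, fun h0 => hw.2 (Subtype.ext h0), ⟨a, Module.End.mem_eigenspace_iff.1 w.2⟩, b, ?_⟩
  have := hw.apply_eq_smul
  exact congrArg Subtype.val this

theorem RC_trace_aux {F : Type u} [Field F] [IsAlgClosed F] {k : Type w} [Field k] [Algebra k F]
    (D : Derivation k F F) (n : ℕ) : ∀ (V : Type v) [AddCommGroup V] [Module F V]
    [FiniteDimensional F V] (_ : Module.finrank F V = n) (A Z E : Module.End F V) (_ : Commute A Z)
    (𝒟 : V →+ V) (_ : ∀ (a : F) (x : V), 𝒟 (a • x) = D a • x + a • 𝒟 x)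
    (_ : ∀ x, E x = 𝒟 (A x) - A (𝒟 x)),
    ∃ S : Multiset (F × F),
      (∀ j : ℕ, LinearMap.trace F V (A ^ j * Z) = (S.map fun s => s.1 ^ j * s.2).sum) ∧
      LinearMap.trace F V (E * Z) = (S.map fun s => D s.1 * s.2).sum := by
  induction n with
  | zero =>
    intro V _ _ _ hV A Z E _ 𝒟 _ _
    have : Subsingleton V := Module.finrank_zero_iff.1 hV
    have h0 : ∀ f : Module.End F V, LinearMap.trace F V f = 0 := fun f => by
      rw [Subsingleton.elim f 0, map_zero]
    exact ⟨0, fun j => by simp [h0], by simp [h0]⟩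
  | succ n ih =>
    intro V _ _ _ hV A Z E hAZ 𝒟 h𝒟 hE
    have : Nontrivial V := Module.nontrivial_of_finrank_eq_succ hV
    obtain ⟨v, hv, ⟨a, ha⟩, b, hb⟩ := RC_common_eigenvector A Z hAZ
    obtain ⟨l, hl⟩ : ∃ l : Module.Dual F V, l v = 1 := Module.Projective.exists_dual_eq_one F hv
    let W := F ∙ v
    let M : Module.End F V := l.smulRight (𝒟 v)
    let 𝒟' : V →+ V := 𝒟 - M.toAddMonoidHom
    have h𝒟a : ∀ x, 𝒟' x = 𝒟 x - M x := fun x => rfl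
    have h𝒟' : ∀ (c : F) (x : V), 𝒟' (c • x) = D c • x + c • 𝒟' x := by
      intro c x
      rw [h𝒟a, h𝒟a, h𝒟, map_smul, smul_sub]; abel
    have h𝒟v : 𝒟' v = 0 := by rw [h𝒟a]; simp [M, hl]
    let E' : Module.End F V := E - (M * A - A * M)
    have hE' : ∀ x, E' x = 𝒟' (A x) - A (𝒟' x) := by
      intro x
      simp only [E', LinearMap.sub_apply, Module.End.mul_apply, h𝒟a, hE, map_sub]; abel
    have hinv : ∀ (f : Module.End F V) (c : F), f v = c • v → W ≤ W.comap f := by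
      intro f c hf
      rw [Submodule.span_singleton_le_iff_mem, Submodule.mem_comap, hf]
      exact Submodule.smul_mem _ _ (Submodule.mem_span_singleton_self v)
    have hE'v : E' v = D a • v := by
      rw [hE', ha, h𝒟', h𝒟v, map_zero]; simp
    let A' := W.mapQ W A (hinv A a ha)
    let Z' := W.mapQ W Z (hinv Z b hb)
    let E'' := W.mapQ W E' (hinv E' _ hE'v)
    have hD0 : ∀ x ∈ W, 𝒟' x ∈ W := by
      intro x hx
      obtain ⟨c, rfl⟩ := Submodule.mem_span_singleton.1 hx
      rw [h𝒟', h𝒟v, smul_zero, add_zero]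
      exact Submodule.smul_mem _ _ (Submodule.mem_span_singleton_self v)
    let 𝒟'' : (V ⧸ W) →+ (V ⧸ W) := QuotientAddGroup.map W.toAddSubgroup W.toAddSubgroup 𝒟' hD0
    have h𝒟''mk : ∀ x : V, 𝒟'' (Submodule.Quotient.mk x) = Submodule.Quotient.mk (𝒟' x) := fun x => rfl
    have hdim : Module.finrank F (V ⧸ W) = n := by
      have h1 := W.finrank_quotient_add_finrank
      have h2 : Module.finrank F W = 1 := finrank_span_singleton hv
      omega
    obtain ⟨S, hS1, hS2⟩ := ih (V ⧸ W) hdim A' Z' E'' (by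
        apply LinearMap.ext; intro x
        obtain ⟨x, rfl⟩ := Submodule.Quotient.mk_surjective _ x
        simp only [Module.End.mul_apply, A', Z', Submodule.mapQ_apply]
        rw [← Module.End.mul_apply, hAZ.eq]; rfl) 𝒟'' (by
        intro c x
        obtain ⟨x, rfl⟩ := Submodule.Quotient.mk_surjective _ x
        rw [← Submodule.Quotient.mk_smul, h𝒟''mk, h𝒟', h𝒟''mk]; rfl) (by
        intro x
        obtain ⟨x, rfl⟩ := Submodule.Quotient.mk_surjective _ x
        rw [h𝒟''mk]
        simp only [A', E'', Submodule.mapQ_apply]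
        rw [h𝒟''mk, hE']; rfl)
    refine ⟨(a, b) ::ₘ S, fun j => ?_, ?_⟩
    · have hj : (A ^ j * Z) v = (a ^ j * b) • v := by
        have : ∀ j : ℕ, (A ^ j) v = a ^ j • v := by
          intro j
          induction j with
          | zero => simp
          | succ j ihj => rw [pow_succ', Module.End.mul_apply, ihj, map_smul, ha, smul_smul, pow_succ]
        rw [Module.End.mul_apply, hb, map_smul, this, smul_smul, mul_comm]
      rw [RC_trace_mapQ v hv _ _ hj (hinv _ _ hj), Multiset.map_cons, Multiset.sum_cons, ← hS1]
      congr 2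
      apply LinearMap.ext; intro x
      obtain ⟨x, rfl⟩ := Submodule.Quotient.mk_surjective _ x
      have : A' ^ j = W.mapQ W (A ^ j) (W.le_comap_pow_of_le_comap (hinv A a ha) j) :=
        (W.mapQ_pow (hinv A a ha) j).symm
      rw [Module.End.mul_apply, this]
      rfl
    · have h1 : LinearMap.trace F V (E * Z) = LinearMap.trace F V (E' * Z) := by
        have : E * Z = E' * Z + (M * (A * Z) - A * (M * Z)) := by
          simp only [E', sub_mul, mul_assoc]; abel
        rw [this, map_add, map_sub, LinearMap.trace_mul_comm F A (M * Z), mul_assoc, hAZ.eq, sub_self,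
          add_zero]
      have hj : (E' * Z) v = (D a * b) • v := by
        rw [Module.End.mul_apply, hb, map_smul, hE'v, smul_smul, mul_comm]
      rw [h1, RC_trace_mapQ v hv _ _ hj (hinv _ _ hj), Multiset.map_cons, Multiset.sum_cons, ← hS2]
      congr 2
      apply LinearMap.ext; intro x
      obtain ⟨x, rfl⟩ := Submodule.Quotient.mk_surjective _ x
      rfl

theorem RC_trace {F : Type u} [Field F] [IsAlgClosed F] {k : Type w} [Field k] [Algebra k F]
    (D : Derivation k F F) (V : Type v) [AddCommGroup V] [Module F V]
    [FiniteDimensional F V] (A Z E : Module.End F V) (hAZ : Commute A Z)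
    (𝒟 : V →+ V) (h𝒟 : ∀ (a : F) (x : V), 𝒟 (a • x) = D a • x + a • 𝒟 x)
    (hE : ∀ x, E x = 𝒟 (A x) - A (𝒟 x))
    (h0 : ∀ j : ℕ, LinearMap.trace F V (A ^ j * Z) = 0) :
    LinearMap.trace F V (E * Z) = 0 := by
  classical
  obtain ⟨S, hS1, hS2⟩ := RC_trace_aux D _ V rfl A Z E hAZ 𝒟 h𝒟 hE
  have hp : ∀ p : Polynomial F, (S.map fun s => p.eval s.1 * s.2).sum = 0 := by
    intro p
    induction p using Polynomial.induction_on' with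
    | add p q hp hq =>
      simp only [Polynomial.eval_add, add_mul, Multiset.sum_map_add, hp, hq, add_zero]
    | monomial n c =>
      simp only [Polynomial.eval_monomial, mul_assoc, Multiset.sum_map_mul_left]
      rw [← hS1, h0, mul_zero]
  let T : Finset F := (S.map Prod.fst).toFinset
  rw [hS2, ← hp (Lagrange.interpolate T id fun a => D a)]
  congr 1
  refine Multiset.map_congr rfl fun s hs => ?_
  congr 1
  have hsT : s.1 ∈ T := Multiset.mem_toFinset.2 (Multiset.mem_map_of_mem _ hs)
  exact (Lagrange.eval_interpolate_at_node (v := id) (fun a => D a) (Set.injOn_id _) hsT).symm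

end

section

open Module

theorem RC_jc_der {K L : Type*} [Field K] [IsAlgClosed K] [LieRing L] [LieAlgebra K L]
    [FiniteDimensional K L] (x : L) (N S : Module.End K L) (hN : IsNilpotent N)
    (hS : S.IsSemisimple) (hc : Commute N S) (h : LieAlgebra.ad K L x = N + S) (a b : L) :
    N ⁅a, b⁆ = ⁅N a, b⁆ + ⁅a, N b⁆ := by
  have key : ∀ (A B : Module.End K L), IsNilpotent (A - B) → Commute A B → ∀ μ : K, ∀ v,
      v ∈ A.maxGenEigenspace μ → v ∈ B.maxGenEigenspace μ := by
    intro A B hnil hAB μ v hv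
    rw [Module.End.mem_maxGenEigenspace] at hv ⊢
    obtain ⟨i, hi⟩ := hv
    obtain ⟨j, hj⟩ := hnil
    refine ⟨i + j, ?_⟩
    have e : B - μ • (1 : Module.End K L) = (A - μ • (1 : Module.End K L)) + (B - A) := by abel
    have hcm : Commute (A - μ • (1 : Module.End K L)) (B - A) := by
      apply Commute.sub_right
      · exact hAB.sub_left ((Commute.one_left _).smul_left _)
      · exact (Commute.refl A).sub_left ((Commute.one_left _).smul_left _)
    have hj' : (B - A) ^ j = 0 := by
      rw [← neg_sub, neg_pow, hj, mul_zero]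
    rw [e, hcm.add_pow']
    simp only [LinearMap.sum_apply, LinearMap.smul_apply]
    apply Finset.sum_eq_zero
    rintro ⟨p, q⟩ hpq
    have := Finset.HasAntidiagonal.mem_antidiagonal.mp hpq
    simp only at this ⊢
    rcases le_or_gt i p with hp | hp
    · rw [(hcm.pow_pow p q).eq, Module.End.mul_apply, Module.End.pow_map_zero_of_le hp hi]
      simp
    · have : (B - A) ^ q = 0 := pow_eq_zero_of_le (by omega) hj'
      simp [this]
  have hAS : Commute (LieAlgebra.ad K L x) S := by rw [h]; exact hc.add_left (Commute.refl S)
  have k1 : ∀ μ v, v ∈ (LieAlgebra.ad K L x).maxGenEigenspace μ → S v = μ • v := by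
    intro μ v hv
    have := key _ S (by simpa [h] using hN) hAS μ v hv
    rw [hS.isFinitelySemisimple.maxGenEigenspace_eq_eigenspace] at this
    exact Module.End.mem_eigenspace_iff.mp this
  have htop := Module.End.iSup_maxGenEigenspace_eq_top (LieAlgebra.ad K L x)
  have hSd : ∀ a b, S ⁅a, b⁆ = ⁅S a, b⁆ + ⁅a, S b⁆ := by
    intro a b
    have ha : a ∈ ⨆ μ, (LieAlgebra.ad K L x).maxGenEigenspace μ := htop ▸ Submodule.mem_top
    have hb : b ∈ ⨆ μ, (LieAlgebra.ad K L x).maxGenEigenspace μ := htop ▸ Submodule.mem_top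
    induction ha using Submodule.iSup_induction' with
    | zero => simp
    | add a a' _ _ h1 h2 => simp only [add_lie, map_add, h1, h2]; abel
    | mem μ a ha =>
      induction hb using Submodule.iSup_induction' with
      | zero => simp
      | add a a' _ _ h1 h2 => simp only [lie_add, map_add, h1, h2]; abel
      | mem ν b hb =>
        have := LieModule.lie_mem_maxGenEigenspace_toEnd (R := K) (L := L) (M := L) ha hb
        rw [k1 _ _ this, k1 _ _ ha, k1 _ _ hb, smul_lie, lie_smul, add_smul]
  have hN' : N = LieAlgebra.ad K L x - S := by rw [h]; abel
  simp only [hN', LinearMap.sub_apply, hSd, LieAlgebra.ad_apply, sub_lie, lie_sub, leibniz_lie x a b]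
  abel

theorem RC_ad_lie {F L : Type*} [Field F] [LieRing L] [LieAlgebra F L] (x y : L) :
    LieAlgebra.ad F L ⁅x, y⁆ = LieAlgebra.ad F L x * LieAlgebra.ad F L y -
      LieAlgebra.ad F L y * LieAlgebra.ad F L x := by
  ext a
  simp

theorem RC_ad_commute {F L : Type*} [Field F] [LieRing L] [LieAlgebra F L] (x y : L)
    (h : ⁅x, y⁆ = 0) : Commute (LieAlgebra.ad F L x) (LieAlgebra.ad F L y) := by
  have := RC_ad_lie (F := F) x y
  rw [h, map_zero] at this
  exact (sub_eq_zero.1 this.symm)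

/-- Elements `u` whose Killing functional is `w ↦ tr (p(ad x) ad w)` for a polynomial `p`. -/
def RCQ (F : Type*) {L : Type*} [Field F] [LieRing L] [LieAlgebra F L] (x : L) : Submodule F L where
  carrier := {u | ∃ p : Polynomial F, ∀ w, killingForm F L u w =
    LinearMap.trace F L (Polynomial.aeval (LieAlgebra.ad F L x) p * LieAlgebra.ad F L w)}
  add_mem' := by
    rintro a b ⟨p, hp⟩ ⟨q, hq⟩
    exact ⟨p + q, fun w => by simp [hp, hq, add_mul]⟩
  zero_mem' := ⟨0, fun w => by simp⟩
  smul_mem' := by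
    rintro c a ⟨p, hp⟩
    exact ⟨c • p, fun w => by simp [hp]⟩

theorem RC_killing_nondeg (F : Type*) (L : Type*) [Field F] [LieRing L] [LieAlgebra F L]
    [FiniteDimensional F L] [LieAlgebra.IsKilling F L] :
    LinearMap.BilinForm.Nondegenerate (killingForm F L) :=
  LieAlgebra.IsKilling.killingForm_nondegenerate F L

theorem RC_killing_refl (F : Type*) (L : Type*) [Field F] [LieRing L] [LieAlgebra F L] :
    LinearMap.BilinForm.IsRefl (killingForm F L) :=
  (LieModule.traceForm_isSymm F L L).isRefl

theorem RC_killing_repr {F L : Type*} [Field F] [LieRing L] [LieAlgebra F L]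
    [FiniteDimensional F L] [LieAlgebra.IsKilling F L] (φ : L →ₗ[F] F) :
    ∃ u, ∀ w, killingForm F L u w = φ w :=
  ⟨(LinearMap.BilinForm.toDual _ (RC_killing_nondeg F L)).symm φ, fun w => by
    exact LinearMap.BilinForm.apply_toDual_symm_apply (hB := RC_killing_nondeg F L) φ w⟩

theorem RC_Q_orth {F L : Type*} [Field F] [LieRing L] [LieAlgebra F L]
    [FiniteDimensional F L] [LieAlgebra.IsKilling F L] (x z : L) :
    z ∈ LinearMap.BilinForm.orthogonal (killingForm F L) (RCQ F x) ↔
      ∀ j : ℕ, LinearMap.trace F L ((LieAlgebra.ad F L x) ^ j * LieAlgebra.ad F L z) = 0 := by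
  rw [LinearMap.BilinForm.mem_orthogonal_iff]
  constructor
  · intro h j
    obtain ⟨u, hu⟩ := RC_killing_repr (LinearMap.trace F L ∘ₗ
      LinearMap.mulLeft F ((LieAlgebra.ad F L x) ^ j) ∘ₗ (LieAlgebra.ad F L : L →ₗ[F] Module.End F L))
    have := h u ⟨Polynomial.X ^ j, fun w => by simpa using hu w⟩
    have e := hu z
    rw [this] at e
    simpa using e.symm
  · rintro h u ⟨p, hp⟩
    change killingForm F L u z = 0
    rw [hp]
    clear hp
    induction p using Polynomial.induction_on' with
    | add p q h1 h2 => rw [map_add, add_mul, map_add, h1, h2, add_zero]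
    | monomial n a => 
      rw [Polynomial.aeval_monomial, mul_assoc, ← Algebra.smul_def, map_smul, h, smul_zero]

theorem RC_one_sided {F L : Type*} [Field F] [LieRing L] [LieAlgebra F L]
    [FiniteDimensional F L] [LieAlgebra.IsKilling F L] (x y : L) (Θ : Submodule F (L × L))
    (ha : ∀ p ∈ Θ, ⁅p.1, y⁆ + ⁅x, p.2⁆ = 0)
    (hb : ∀ p ∈ Θ, ∀ z, ⁅x, z⁆ = 0 →
      (∀ j : ℕ, LinearMap.trace F L ((LieAlgebra.ad F L x) ^ j * LieAlgebra.ad F L z) = 0) →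
      killingForm F L p.1 z = 0)
    (hc : finrank F L + finrank F (RCQ F x) ≤ finrank F Θ) (C N W : Submodule F L)
    (hC : C = LinearMap.ker (LieAlgebra.ad F L x))
    (hN : N = C ⊓ LinearMap.BilinForm.orthogonal (killingForm F L) (RCQ F x))
    (hW : W = LinearMap.BilinForm.orthogonal (killingForm F L) N) :
    (∀ p ∈ Θ, p.1 ∈ W) ∧ (∀ u v, u ∈ W → ⁅u, y⁆ + ⁅x, v⁆ = 0 → (u, v) ∈ Θ) ∧ (∀ u ∈ W, ∃ v, (u, v) ∈ Θ) ∧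
      C ⊔ LinearMap.BilinForm.orthogonal (killingForm F L) (RCQ F x) = ⊤ := by
  let Ψ : L × L →ₗ[F] L := -(LieAlgebra.ad F L y) ∘ₗ LinearMap.fst F L L +
    (LieAlgebra.ad F L x) ∘ₗ LinearMap.snd F L L
  have hΨ : ∀ p, Ψ p = ⁅p.1, y⁆ + ⁅x, p.2⁆ := by
    intro p; simp [Ψ]
  let Φ : Submodule F (L × L) := W.comap (LinearMap.fst F L L) ⊓ LinearMap.ker Ψ
  have hΦ : ∀ p, p ∈ Φ ↔ p.1 ∈ W ∧ ⁅p.1, y⁆ + ⁅x, p.2⁆ = 0 := by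
    intro p; simp [Φ, hΨ]
  have hle : Θ ≤ Φ := by
    intro p hp
    rw [hΦ]
    refine ⟨?_, ha p hp⟩
    rw [hW, LinearMap.BilinForm.mem_orthogonal_iff]
    intro z hz
    rw [hN, Submodule.mem_inf, RC_Q_orth, hC] at hz
    have := hb p hp z (by simpa using hz.1) hz.2
    exact RC_killing_refl F L _ _ this
  let f := (LinearMap.fst F L L).domRestrict Φ
  have hrk := LinearMap.finrank_range_add_finrank_ker f
  have hr : LinearMap.range f ≤ W := by
    rintro _ ⟨p, rfl⟩
    exact ((hΦ _).1 p.2).1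
  have hk : finrank F (LinearMap.ker f) ≤ finrank F C := by
    let s : LinearMap.ker f →ₗ[F] C := LinearMap.codRestrict C
      ((LinearMap.snd F L L) ∘ₗ Φ.subtype ∘ₗ (LinearMap.ker f).subtype) (by
        intro p
        have h1 := ((hΦ _).1 p.1.2).2
        have h2 : p.1.1.1 = 0 := p.2
        rw [h2] at h1
        rw [hC]
        simpa using h1)
    apply LinearMap.finrank_le_finrank_of_injective (f := s)
    intro p q hpq
    have h1 : p.1.1.2 = q.1.1.2 := congrArg Subtype.val hpq
    have h2 : p.1.1.1 = 0 := p.2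
    have h3 : q.1.1.1 = 0 := q.2
    exact Subtype.ext (Subtype.ext (Prod.ext (h2.trans h3.symm) h1))
  have d1 := LinearMap.BilinForm.finrank_orthogonal (RC_killing_nondeg F L) N
  rw [← hW] at d1
  have d2 := LinearMap.BilinForm.finrank_orthogonal (RC_killing_nondeg F L) (RCQ F x)
  have d3 := Submodule.finrank_sup_add_finrank_inf_eq C
    (LinearMap.BilinForm.orthogonal (killingForm F L) (RCQ F x))
  rw [← hN] at d3
  have d4 := Submodule.finrank_le (C ⊔
    (LinearMap.BilinForm.orthogonal (killingForm F L) (RCQ F x)))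
  have d5 := Submodule.finrank_le N
  have d6 := Submodule.finrank_le (RCQ F x)
  have d7 := Submodule.finrank_mono hle
  have d8 := Submodule.finrank_mono hr
  have e1 : Θ = Φ := Submodule.eq_of_le_of_finrank_le hle (by omega)
  have e2 : LinearMap.range f = W := Submodule.eq_of_le_of_finrank_le hr (by omega)
  refine ⟨fun p hp => ((hΦ p).1 (hle hp)).1, ?_, ?_, ?_⟩
  · intro u v hu huv
    rw [e1, hΦ]
    exact ⟨hu, huv⟩
  · intro u hu
    rw [← e2] at hu
    obtain ⟨p, rfl⟩ := hu
    exact ⟨p.1.2, e1 ▸ p.2⟩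
  · exact Submodule.eq_top_of_finrank_eq (by omega)

theorem RC_Q_comm {F L : Type*} [Field F] [LieRing L] [LieAlgebra F L]
    [FiniteDimensional F L] [LieAlgebra.IsKilling F L] (x u z : L) (hu : u ∈ RCQ F x)
    (hz : ⁅x, z⁆ = 0) : ⁅u, z⁆ = 0 := by
  obtain ⟨p, hp⟩ := hu
  apply (RC_killing_nondeg F L).1
  intro w
  rw [LieModule.traceForm_apply_lie_apply]
  change killingForm F L u _ = 0
  rw [hp, RC_ad_lie, mul_sub, map_sub, sub_eq_zero]
  have hcom : Commute (LieAlgebra.ad F L z) (LieAlgebra.ad F L x) := (RC_ad_commute x z hz).symm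
  have hcp : Commute (LieAlgebra.ad F L z) (Polynomial.aeval (LieAlgebra.ad F L x) p) :=
    Algebra.commute_of_mem_adjoin_singleton_of_commute (Polynomial.aeval_mem_adjoin_singleton _ _)
      hcom
  rw [← mul_assoc, ← hcp.eq, mul_assoc, LinearMap.trace_mul_comm, mul_assoc]

theorem RC_ss {F L : Type*} [Field F] [IsAlgClosed F] [CharZero F] [LieRing L] [LieAlgebra F L]
    [FiniteDimensional F L] [LieAlgebra.IsKilling F L] (x : L)
    (h : LinearMap.ker (LieAlgebra.ad F L x) ⊔
      LinearMap.BilinForm.orthogonal (killingForm F L) (RCQ F x) = ⊤) :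
    (LieAlgebra.ad F L x).IsSemisimple := by
  obtain ⟨N, hN, S, hS, hnil, hss, he⟩ := (LieAlgebra.ad F L x).exists_isNilpotent_isSemisimple
  have hcNx : Commute N (LieAlgebra.ad F L x) :=
    (Algebra.commute_of_mem_adjoin_singleton_of_commute hN (Commute.refl _)).symm
  have hcNS : Commute N S := by
    have : S = LieAlgebra.ad F L x - N := by rw [he]; abel
    rw [this]; exact hcNx.sub_right (Commute.refl _)
  obtain ⟨ν, hν⟩ := RC_killing_repr (LinearMap.trace F L ∘ₗ
      LinearMap.mulLeft F N ∘ₗ (LieAlgebra.ad F L : L →ₗ[F] Module.End F L))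
  have hν' : ∀ w, killingForm F L ν w = LinearMap.trace F L (N * LieAlgebra.ad F L w) := hν
  have hν0 : ∀ w, killingForm F L ν w = 0 := by
    intro w
    have hw : w ∈ LinearMap.ker (LieAlgebra.ad F L x) ⊔
      LinearMap.BilinForm.orthogonal (killingForm F L) (RCQ F x) := h ▸ Submodule.mem_top
    obtain ⟨z, hz, q, hq, rfl⟩ := Submodule.mem_sup.1 hw
    rw [map_add]
    have h1 : killingForm F L ν z = 0 := by
      rw [hν']
      have hz0 : ⁅x, z⁆ = 0 := by simpa using hz
      have hcom : Commute (LieAlgebra.ad F L z) (LieAlgebra.ad F L x) := (RC_ad_commute x z hz0).symm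
      have hcN : Commute (LieAlgebra.ad F L z) N :=
        Algebra.commute_of_mem_adjoin_singleton_of_commute hN hcom
      exact (LinearMap.isNilpotent_trace_of_isNilpotent (hcN.symm.isNilpotent_mul_right hnil)).eq_zero
    have h2 : killingForm F L ν q = 0 := by
      rw [Algebra.adjoin_singleton_eq_range_aeval] at hN
      obtain ⟨p, hp⟩ := hN
      exact hq ν ⟨p, fun w => by rw [hν', ← hp]; rfl⟩
    rw [h1, h2, add_zero]
  let D : LieDerivation F L L := ⟨N, fun a b => by
    rw [RC_jc_der x N S hnil hss hcNS he, ← lie_skew b]; abel⟩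
  obtain ⟨ν', hD⟩ := LieDerivation.IsKilling.exists_eq_ad D
  have hNν : LieAlgebra.ad F L ν' = N := by
    ext a
    have := congrArg (fun E : LieDerivation F L L => E a) hD
    simp only [LieDerivation.ad_apply_apply] at this
    exact this
  have hz : ν' = 0 := by
    apply (RC_killing_nondeg F L).1
    intro w
    have := hν0 w
    rw [hν', ← hNν] at this
    exact this
  rw [hz, map_zero] at hNν
  rw [he, ← hNν, zero_add]
  exact hss

theorem RC_L4 {F L : Type*} [Field F] [IsAlgClosed F] [CharZero F] [LieRing L] [LieAlgebra F L]
    [FiniteDimensional F L] [LieAlgebra.IsKilling F L] (x y : L) (hxy : ⁅x, y⁆ = 0)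
    (Θ : Submodule F (L × L))
    (ha : ∀ p ∈ Θ, ⁅p.1, y⁆ + ⁅x, p.2⁆ = 0)
    (hb : ∀ p ∈ Θ, ∀ z, ⁅x, z⁆ = 0 →
      (∀ j : ℕ, LinearMap.trace F L ((LieAlgebra.ad F L x) ^ j * LieAlgebra.ad F L z) = 0) →
      killingForm F L p.1 z = 0)
    (hb' : ∀ p ∈ Θ, ∀ z, ⁅y, z⁆ = 0 →
      (∀ j : ℕ, LinearMap.trace F L ((LieAlgebra.ad F L y) ^ j * LieAlgebra.ad F L z) = 0) →
      killingForm F L p.2 z = 0)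
    (hc : finrank F L + finrank F (RCQ F x) ≤ finrank F Θ)
    (hc' : finrank F L + finrank F (RCQ F y) ≤ finrank F Θ) (u : L) : ∃ v, (u, v) ∈ Θ := by
  set κ := killingForm F L with hκ
  have nd : LinearMap.BilinForm.Nondegenerate κ := RC_killing_nondeg F L
  have rf : LinearMap.BilinForm.IsRefl κ := RC_killing_refl F L
  set C := LinearMap.ker (LieAlgebra.ad F L x) with hC
  set N := C ⊓ LinearMap.BilinForm.orthogonal κ (RCQ F x) with hN
  set W := LinearMap.BilinForm.orthogonal κ N with hW
  obtain ⟨hx0, hx1, hx2, hx3⟩ := RC_one_sided x y Θ ha hb hc C N W hC hN hW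
  obtain ⟨-, hy1, -, -⟩ := RC_one_sided y x
    (Θ.map (LinearEquiv.prodComm F L L : L × L →ₗ[F] L × L))
    (by
      rintro _ ⟨p, hp, rfl⟩
      have this0 : ⁅x, p.2⁆ = ⁅y, p.1⁆ := by
        rw [← lie_skew y, eq_neg_iff_add_eq_zero, add_comm]; exact ha p hp
      simp only [LinearEquiv.coe_coe, LinearEquiv.prodComm_apply, Prod.fst_swap, Prod.snd_swap]
      rw [← lie_skew, this0, neg_add_cancel])
    (by
      rintro _ ⟨p, hp, rfl⟩
      exact hb' p hp)
    (by
      rw [LinearEquiv.finrank_map_eq]; exact hc') _ _ _ rfl rfl rfl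
  have hss := RC_ss x hx3
  have hdisj : ∀ a : L, ⁅x, ⁅x, a⁆⁆ = 0 → ⁅x, a⁆ = 0 := by
    intro a h
    have h1 : a ∈ (LieAlgebra.ad F L x).maxGenEigenspace 0 := by
      rw [Module.End.mem_maxGenEigenspace]
      exact ⟨2, by simpa [pow_two] using h⟩
    rw [hss.isFinitelySemisimple.maxGenEigenspace_eq_eigenspace, Module.End.mem_eigenspace_iff] at h1
    simpa using h1
  have hCperp : LinearMap.BilinForm.orthogonal κ C ≤ LinearMap.range (LieAlgebra.ad F L x) := by
    rw [← LinearMap.BilinForm.orthogonal_orthogonal nd rf (LinearMap.range (LieAlgebra.ad F L x))]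
    apply LinearMap.BilinForm.orthogonal_le
    intro z hz
    rw [hC, LinearMap.mem_ker, LieAlgebra.ad_apply]
    apply nd.1
    intro w
    have h1 := hz ⁅x, w⁆ ⟨w, rfl⟩
    have h2 : κ ⁅x, w⁆ z = - κ w ⁅x, z⁆ := LieModule.traceForm_apply_lie_apply' F L L x w z
    have h3 : κ ⁅x, w⁆ z = 0 := h1
    rw [h3] at h2
    exact rf _ _ (neg_eq_zero.1 h2.symm)
  have hmemC : ∀ a, a ∈ C ↔ ⁅x, a⁆ = 0 := by intro a; simp [hC]
  have hCy : ∀ z, ⁅y, z⁆ = 0 → z ∈ W := by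
    intro z hz
    have h1 := hy1 0 z (Submodule.zero_mem _) (by simpa using hz)
    obtain ⟨p, hp, he⟩ := h1
    have h2 := hx0 p hp
    have : p.1 = z := congrArg Prod.snd he
    rwa [this] at h2
  have hWle : W ≤ LinearMap.BilinForm.orthogonal κ C ⊔ RCQ F x := by
    rw [← LinearMap.BilinForm.orthogonal_orthogonal nd rf
      (LinearMap.BilinForm.orthogonal κ C ⊔ RCQ F x)]
    apply LinearMap.BilinForm.orthogonal_le
    intro z hz
    refine ⟨?_, ?_⟩
    · rw [← LinearMap.BilinForm.orthogonal_orthogonal nd rf C]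
      exact LinearMap.BilinForm.orthogonal_le le_sup_left hz
    · exact LinearMap.BilinForm.orthogonal_le le_sup_right hz
  have hyQ : y ∈ RCQ F x := by
    obtain ⟨c, hcc, q, hq, hcq⟩ := Submodule.mem_sup.1 (hWle (hCy y (lie_self y)))
    have hqC : ⁅x, q⁆ = 0 := by
      rw [← lie_skew, RC_Q_comm x q x hq (lie_self x), neg_zero]
    obtain ⟨a, rfl⟩ := hCperp hcc
    rw [LieAlgebra.ad_apply] at hcq
    have : ⁅x, ⁅x, a⁆⁆ = 0 := by
      have e : ⁅x, a⁆ = y - q := by rw [← hcq]; abel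
      rw [e, lie_sub, hxy, hqC, sub_zero]
    rw [hdisj a this, zero_add] at hcq
    exact hcq ▸ hq
  have hCW : C ≤ W := fun z hz => hCy z (RC_Q_comm x y z hyQ ((hmemC z).1 hz))
  have hN0 : N = ⊥ := by
    rw [eq_bot_iff]
    intro z hz
    have h1 : z ∈ LinearMap.BilinForm.orthogonal κ C := by
      intro c hc
      have : κ z c = 0 := hCW hc z hz
      exact rf _ _ this
    obtain ⟨a, rfl⟩ := hCperp h1
    have := (hmemC _).1 hz.1
    exact hdisj a this
  apply hx2
  rw [hW, hN0]
  simp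

end

section

open Module
open scoped TensorProduct

theorem RC_algInd {k F ι : Type*} [Field k] [CharZero k] [Field F] [Algebra k F] [Finite ι]
    (c : ι → F) (h : ∀ u : ι → F, ∃ D : Derivation k F F, ∀ i, D (c i) = u i) :
    AlgebraicIndependent k c := by
  classical
  rw [algebraicIndependent_iff]
  suffices H : ∀ n (P : MvPolynomial ι k), P.totalDegree < n → MvPolynomial.aeval c P = 0 → P = 0 from
    fun P hP => H _ P (Nat.lt_succ_self _) hP
  intro n
  induction n with
  | zero => intro P hP; omega
  | succ n ih =>
    intro P hP h0
    have hder : ∀ i, MvPolynomial.pderiv i P = 0 := by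
      intro i
      by_cases hconst : P.totalDegree = 0
      · rw [MvPolynomial.totalDegree_eq_zero_iff_eq_C] at hconst
        rw [hconst, MvPolynomial.pderiv_C]
      apply ih
      · have : (MvPolynomial.pderiv i P).totalDegree < P.totalDegree := by
          rw [MvPolynomial.totalDegree, Finset.sup_lt_iff (by simpa using Nat.pos_of_ne_zero hconst)]
          intro m hm
          rw [MvPolynomial.mem_support_iff, MvPolynomial.coeff_pderiv] at hm
          have hm' : m + Finsupp.single i 1 ∈ P.support := by
            rw [MvPolynomial.mem_support_iff]
            intro h; simp [h] at hm
          have := MvPolynomial.le_totalDegree hm'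
          rw [Finsupp.sum_add_index' (by simp) (by simp)] at this
          simp at this
          omega
        omega
      · obtain ⟨D, hD⟩ := h (Pi.single i 1)
        have h1 : ∀ Q : MvPolynomial ι k, D (MvPolynomial.aeval c Q) =
            MvPolynomial.aeval c (MvPolynomial.pderiv i Q) := by
          intro Q
          induction Q using MvPolynomial.induction_on with
          | C a => simp
          | add p q hp hq => simp [hp, hq]
          | mul_X p j hp =>
            simp only [map_mul, MvPolynomial.aeval_X, Derivation.leibniz, hp, hD, smul_eq_mul,
              map_add, MvPolynomial.pderiv_X]
            by_cases hij : i = j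
            · subst hij; simp
            · simp [Pi.single_eq_of_ne (Ne.symm hij)]
        rw [← h1, h0, map_zero]
    have hC : P = MvPolynomial.C (P.coeff 0) := by
      ext m
      rw [MvPolynomial.coeff_C]
      split_ifs with hm
      · rw [hm]
      · obtain ⟨i, hi⟩ : ∃ i, m i ≠ 0 := by
          by_contra! hh
          exact hm (Finsupp.ext fun i => (hh i).symm)
        have := congrArg (MvPolynomial.coeff (m - Finsupp.single i 1)) (hder i)
        rw [MvPolynomial.coeff_pderiv] at this
        have e : m - Finsupp.single i 1 + Finsupp.single i 1 = m := by
          apply tsub_add_cancel_of_le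
          simpa using Nat.one_le_iff_ne_zero.2 hi
        rw [e, MvPolynomial.coeff_zero] at this
        rcases mul_eq_zero.1 this with h | h
        · exact h
        · exfalso
          have : (((m - Finsupp.single i 1 : ι →₀ ℕ) i : ℕ) : k) + 1 ≠ 0 := Nat.cast_add_one_ne_zero _
          exact this h
    rw [hC] at h0 ⊢
    simp only [MvPolynomial.aeval_C, map_eq_zero] at h0
    rw [h0, map_zero]

/-- The vector of `A ⊗ g` with coordinates `c`. -/
noncomputable def RCvec {k g ι : Type*} [Field k] [LieRing g] [LieAlgebra k g] [Fintype ι] (b : Basis ι k g)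
    (A : Type*) [CommRing A] [Algebra k A] : (ι → A) ≃ₗ[A] (A ⊗[k] g) :=
  (Algebra.TensorProduct.basis A b).equivFun.symm

theorem RC_vec_apply {k g ι : Type*} [Field k] [LieRing g] [LieAlgebra k g] [Fintype ι]
    (b : Basis ι k g) {A : Type*} [CommRing A] [Algebra k A] (c : ι → A) :
    RCvec b A c = ∑ i, c i ⊗ₜ[k] b i := by
  simp [RCvec, Basis.equivFun_symm_apply, TensorProduct.smul_tmul']

theorem RC_vec_symm_tmul {k g ι : Type*} [Field k] [LieRing g] [LieAlgebra k g] [Fintype ι]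
    (b : Basis ι k g) {A : Type*} [CommRing A] [Algebra k A] (a : A) (z : g) (l : ι) :
    (RCvec b A).symm (a ⊗ₜ[k] z) l = a * algebraMap k A (b.repr z l) := by
  simp [RCvec, Algebra.smul_def, mul_comm]

theorem RC_vec_lie {k g ι : Type*} [Field k] [LieRing g] [LieAlgebra k g] [Fintype ι]
    (b : Basis ι k g) {A : Type*} [CommRing A] [Algebra k A] (c d : ι → A) (l : ι) :
    (RCvec b A).symm ⁅RCvec b A c, RCvec b A d⁆ l =
      ∑ i, ∑ j, c i * d j * algebraMap k A (b.repr ⁅b i, b j⁆ l) := by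
  rw [RC_vec_apply, RC_vec_apply, sum_lie]
  simp only [lie_sum, map_sum, Finset.sum_apply, LieAlgebra.ExtendScalars.bracket_tmul, RC_vec_symm_tmul]

theorem RC_toMatrix {k g ι : Type*} [Field k] [LieRing g] [LieAlgebra k g] [Fintype ι]
    [DecidableEq ι]
    (b : Basis ι k g) {A : Type*} [CommRing A] [Algebra k A] (c : ι → A) (l j : ι) :
    LinearMap.toMatrix (Algebra.TensorProduct.basis A b) (Algebra.TensorProduct.basis A b)
      (LieAlgebra.ad A (A ⊗[k] g) (RCvec b A c)) l j =
      ∑ i, c i * algebraMap k A (b.repr ⁅b i, b j⁆ l) := by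
  rw [LinearMap.toMatrix_apply]
  have h := RC_vec_lie b c (Pi.single j 1) l
  have e : RCvec b A (Pi.single j 1) = Algebra.TensorProduct.basis A b j := by
    rw [RC_vec_apply, Finset.sum_eq_single j] <;> simp +contextual [Pi.single_apply]
  rw [e] at h
  rw [LieAlgebra.ad_apply]
  refine h.trans ?_
  apply Finset.sum_congr rfl
  intro i _
  rw [Finset.sum_eq_single j] <;> simp +contextual [Pi.single_apply]

theorem RC_trace_map {k g ι : Type*} [Field k] [LieRing g] [LieAlgebra k g] [Fintype ι]
    [DecidableEq ι] (b : Basis ι k g) {A A' : Type*} [CommRing A] [Algebra k A] [CommRing A']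
    [Algebra k A'] (φ : A →ₐ[k] A') (c d : ι → A) (j : ℕ) :
    LinearMap.trace A' _ ((LieAlgebra.ad A' (A' ⊗[k] g) (RCvec b A' (φ ∘ c))) ^ j *
      LieAlgebra.ad A' (A' ⊗[k] g) (RCvec b A' (φ ∘ d))) =
    φ (LinearMap.trace A _ ((LieAlgebra.ad A (A ⊗[k] g) (RCvec b A c)) ^ j *
      LieAlgebra.ad A (A ⊗[k] g) (RCvec b A d))) := by
  have key : ∀ c : ι → A, LinearMap.toMatrix (Algebra.TensorProduct.basis A' b)
      (Algebra.TensorProduct.basis A' b) (LieAlgebra.ad A' (A' ⊗[k] g) (RCvec b A' (φ ∘ c))) =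
      (φ : A →+* A').mapMatrix (LinearMap.toMatrix (Algebra.TensorProduct.basis A b)
        (Algebra.TensorProduct.basis A b) (LieAlgebra.ad A (A ⊗[k] g) (RCvec b A c))) := by
    intro c
    ext l j
    rw [RingHom.mapMatrix_apply, Matrix.map_apply, RC_toMatrix, RC_toMatrix]
    simp
  rw [LinearMap.trace_eq_matrix_trace A' (Algebra.TensorProduct.basis A' b),
    LinearMap.trace_eq_matrix_trace A (Algebra.TensorProduct.basis A b),
    LinearMap.toMatrix_mul, LinearMap.toMatrix_mul, ← LinearMap.toMatrix_pow, ← LinearMap.toMatrix_pow,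
    key, key, ← map_pow, ← map_mul]
  exact (AddMonoidHom.map_trace (φ : A →+* A').toAddMonoidHom _).symm

theorem RC_ad_lie' {F L : Type*} [CommRing F] [LieRing L] [LieAlgebra F L] (x y : L) :
    LieAlgebra.ad F L ⁅x, y⁆ = LieAlgebra.ad F L x * LieAlgebra.ad F L y -
      LieAlgebra.ad F L y * LieAlgebra.ad F L x := by
  ext a
  simp

theorem RC_trace_rel {k g ι : Type*} [Field k] [LieRing g] [LieAlgebra k g] [Fintype ι]
    (b : Basis ι k g) {A : Type*} [CommRing A] [Algebra k A] (x z : A ⊗[k] g)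
    (j : ℕ) : ∑ l, LinearMap.trace A _ ((LieAlgebra.ad A (A ⊗[k] g) x) ^ j *
      LieAlgebra.ad A (A ⊗[k] g) (1 ⊗ₜ b l)) * (RCvec b A).symm ⁅x, z⁆ l = 0 := by
  have h1 : ⁅x, z⁆ = ∑ l, (RCvec b A).symm ⁅x, z⁆ l • ((1 : A) ⊗ₜ[k] b l) := by
    conv_lhs => rw [← (RCvec b A).apply_symm_apply ⁅x, z⁆, RC_vec_apply]
    simp [TensorProduct.smul_tmul']
  have h2 : LinearMap.trace A _ ((LieAlgebra.ad A (A ⊗[k] g) x) ^ j *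
      LieAlgebra.ad A (A ⊗[k] g) ⁅x, z⁆) = 0 := by
    rw [RC_ad_lie', mul_sub, map_sub, sub_eq_zero, ← mul_assoc, ← mul_assoc,
      LinearMap.trace_mul_comm _ (_ * _) (LieAlgebra.ad A (A ⊗[k] g) x), ← mul_assoc, ← pow_succ,
      ← pow_succ']
  rw [← h2]
  conv_rhs => rw [h1]
  simp [Finset.mul_sum, mul_comm]

theorem RC_isKilling {k g : Type*} [Field k] [LieRing g] [LieAlgebra k g]
    [FiniteDimensional k g] [LieAlgebra.IsKilling k g] (F : Type*) [Field F] [Algebra k F] :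
    LieAlgebra.IsKilling F (F ⊗[k] g) := by
  classical
  let b := Module.finBasis k g
  have h1 : (killingForm F (F ⊗[k] g)) = (killingForm k g).baseChange F :=
    LieModule.traceForm_baseChange (R := k) (L := g) (M := g) F
  have h2 : LinearMap.BilinForm.Nondegenerate (killingForm F (F ⊗[k] g)) := by
    rw [LinearMap.BilinForm.nondegenerate_iff_det_ne_zero (Algebra.TensorProduct.basis F b)]
    have h3 : LinearMap.BilinForm.toMatrix (Algebra.TensorProduct.basis F b) (killingForm F (F ⊗[k] g)) =
      (algebraMap k F).mapMatrix (LinearMap.BilinForm.toMatrix b (killingForm k g)) := by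
      ext i j
      simp [h1, LinearMap.BilinForm.toMatrix_apply, Algebra.algebraMap_eq_smul_one]
    rw [h3, ← RingHom.map_det]
    simpa using (LinearMap.BilinForm.nondegenerate_iff_det_ne_zero b).1
      (LieAlgebra.IsKilling.killingForm_nondegenerate k g)
  constructor
  rw [eq_bot_iff]
  intro m hm
  rw [LieIdeal.mem_killingCompl] at hm
  exact h2.2 m (fun w => hm w trivial)

end

section

open Module
open scoped TensorProduct

theorem RC_finrank_Q {F L ι : Type*} [Field F] [LieRing L] [LieAlgebra F L] [Fintype ι]
    [FiniteDimensional F L] [LieAlgebra.IsKilling F L] (x : L) (B : Basis ι F L) :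
    finrank F (RCQ F x) ≤ finrank F (Submodule.span F (Set.range fun (j : ℕ) (l : ι) =>
      LinearMap.trace F L ((LieAlgebra.ad F L x) ^ j * LieAlgebra.ad F L (B l)))) := by
  let T : L →ₗ[F] (ι → F) := LinearMap.pi fun l => (killingForm F L).flip (B l)
  have hT : ∀ u l, T u l = killingForm F L u (B l) := fun u l => rfl
  have hinj : Function.Injective T := by
    rw [injective_iff_map_eq_zero]
    intro u hu
    apply (RC_killing_nondeg F L).1
    intro w
    have : killingForm F L u = 0 := B.ext fun l => by rw [← hT, hu]; rfl
    rw [this]; rfl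
  rw [(Submodule.equivMapOfInjective T hinj (RCQ F x)).finrank_eq]
  apply Submodule.finrank_mono
  rintro _ ⟨u, ⟨p, hp⟩, rfl⟩
  have e : T u = fun l => LinearMap.trace F L
      (Polynomial.aeval (LieAlgebra.ad F L x) p * LieAlgebra.ad F L (B l)) := by
    ext l; rw [hT, hp]
  rw [e]
  clear hp e
  induction p using Polynomial.induction_on' with
  | add p q h1 h2 =>
    convert Submodule.add_mem _ h1 h2 using 1
    ext l
    simp [add_mul]
  | monomial n a =>
    have h3 := Submodule.smul_mem _ a (Submodule.subset_span (R := F) (Set.mem_range_self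
      (f := fun (j : ℕ) (l : ι) =>
      LinearMap.trace F L ((LieAlgebra.ad F L x) ^ j * LieAlgebra.ad F L (B l))) n))
    convert h3 using 1
    ext l
    rw [Polynomial.aeval_monomial, mul_assoc, ← Algebra.smul_def, map_smul]
    rfl

/-- `D ⊗ id` on `F ⊗ g`. -/
noncomputable def RCDt {k F : Type*} (g : Type*) [Field k] [Field F] [Algebra k F] [LieRing g] [LieAlgebra k g]
    (D : Derivation k F F) : F ⊗[k] g →ₗ[k] F ⊗[k] g := (D : F →ₗ[k] F).rTensor g

theorem RC_Dt_smul {k F g : Type*} [Field k] [Field F] [Algebra k F] [LieRing g] [LieAlgebra k g]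
    (D : Derivation k F F) (a : F) (w : F ⊗[k] g) :
    RCDt g D (a • w) = D a • w + a • RCDt g D w := by
  induction w using TensorProduct.induction_on with
  | zero => simp
  | tmul c z => simp [RCDt, TensorProduct.smul_tmul', TensorProduct.add_tmul, add_comm, mul_comm]
  | add u v hu hv => simp only [smul_add, map_add, hu, hv]; abel

theorem RC_Dt_lie {k F g : Type*} [Field k] [Field F] [Algebra k F] [LieRing g] [LieAlgebra k g]
    (D : Derivation k F F) (u w : F ⊗[k] g) :
    RCDt g D ⁅u, w⁆ = ⁅RCDt g D u, w⁆ + ⁅u, RCDt g D w⁆ := by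
  induction u using TensorProduct.induction_on with
  | zero => simp
  | add u v hu hv => simp only [add_lie, map_add, hu, hv]; abel
  | tmul c z =>
    induction w using TensorProduct.induction_on with
    | zero => simp
    | add u v hu hv => simp only [lie_add, map_add, hu, hv]; abel
    | tmul c' z' =>
      simp [RCDt, TensorProduct.add_tmul, add_comm, mul_comm]

theorem RC_Dt_vec {k F g ι : Type*} [Field k] [Field F] [Algebra k F] [LieRing g] [LieAlgebra k g]
    [Fintype ι] (b : Basis ι k g) (D : Derivation k F F) (c : ι → F) :
    RCDt g D (RCvec b F c) = RCvec b F (fun i => D (c i)) := by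
  simp [RC_vec_apply, RCDt]

/-- The equations of the commuting variety. -/
noncomputable def RCf {k g ι : Type*} [Field k] [LieRing g] [LieAlgebra k g] [Fintype ι] (b : Basis ι k g)
    (l : ι) : MvPolynomial (ι ⊕ ι) k :=
  (RCvec b (MvPolynomial (ι ⊕ ι) k)).symm ⁅RCvec b (MvPolynomial (ι ⊕ ι) k)
    (fun i => MvPolynomial.X (Sum.inl i)),
    RCvec b (MvPolynomial (ι ⊕ ι) k) (fun i => MvPolynomial.X (Sum.inr i))⁆ l

theorem RC_aeval_f {k g ι : Type*} [Field k] [LieRing g] [LieAlgebra k g] [Fintype ι]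
    (b : Basis ι k g) {F : Type*} [CommRing F] [Algebra k F] (c : ι ⊕ ι → F) (l : ι) :
    MvPolynomial.aeval c (RCf b l) =
      (RCvec b F).symm ⁅RCvec b F (c ∘ Sum.inl), RCvec b F (c ∘ Sum.inr)⁆ l := by
  rw [RCf, RC_vec_lie, RC_vec_lie]
  simp [MvPolynomial.algebraMap_eq]

theorem RC_vec_single {k g ι : Type*} [Field k] [LieRing g] [LieAlgebra k g] [Fintype ι]
    [DecidableEq ι]
    (b : Basis ι k g) {A : Type*} [CommRing A] [Algebra k A] (j : ι) :
    RCvec b A (Pi.single j 1) = 1 ⊗ₜ b j := by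
  rw [RC_vec_apply, Finset.sum_eq_single j] <;> simp +contextual [Pi.single_apply]

theorem RC_main_aux {k g ι : Type*} [Field k] [CharZero k] [LieRing g] [LieAlgebra k g]
    [FiniteDimensional k g]
    [LieAlgebra.IsKilling k g] [Fintype ι] (b : Basis ι k g)
    {F : Type*} [Field F] [IsAlgClosed F] [Algebra k F] (c : ι ⊕ ι → F)
    (hp : RingHom.ker (MvPolynomial.aeval c : MvPolynomial (ι ⊕ ι) k →ₐ[k] F) ∈
      (Ideal.span (Set.range (RCf b))).minimalPrimes) :
    AlgebraicIndependent k (c ∘ Sum.inl) := by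
  classical
  have : CharZero F := charZero_of_injective_algebraMap (algebraMap k F).injective
  have := RC_isKilling (k := k) (g := g) F
  set x := RCvec b F (c ∘ Sum.inl) with hx
  set y := RCvec b F (c ∘ Sum.inr) with hy
  set p := RingHom.ker (MvPolynomial.aeval c : MvPolynomial (ι ⊕ ι) k →ₐ[k] F) with hpdef
  have hpI : ∀ l, MvPolynomial.aeval c (RCf b l) = 0 := fun l =>
    hp.1.2 (Ideal.subset_span ⟨l, rfl⟩)
  have hxy : ⁅x, y⁆ = 0 := by
    apply (RCvec b F).symm.injective
    ext l
    rw [← RC_aeval_f, hpI, map_zero]; rfl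
  let ψ : (ι ⊕ ι → F) ≃ₗ[F] (F ⊗[k] g) × (F ⊗[k] g) :=
    (LinearEquiv.sumArrowLequivProdArrow ι ι F F).trans
      (LinearEquiv.prodCongr (RCvec b F) (RCvec b F))
  let Θ : Submodule F ((F ⊗[k] g) × (F ⊗[k] g)) := (LinearMap.range (RCder k F c)).map ψ.toLinearMap
  have hΘ : ∀ q ∈ Θ, ∃ D : Derivation k F F, q = (RCDt g D x, RCDt g D y) := by
    rintro _ ⟨_, ⟨D, rfl⟩, rfl⟩
    refine ⟨D, ?_⟩
    rw [hx, hy, RC_Dt_vec, RC_Dt_vec]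
    rfl
  have htr : ∀ (D : Derivation k F F) (x z : F ⊗[k] g), ⁅x, z⁆ = 0 →
      (∀ j : ℕ, LinearMap.trace F _ ((LieAlgebra.ad F (F ⊗[k] g) x) ^ j *
        LieAlgebra.ad F (F ⊗[k] g) z) = 0) → killingForm F (F ⊗[k] g) (RCDt g D x) z = 0 := by
    intro D x z hxz hj
    exact RC_trace D (F ⊗[k] g) (LieAlgebra.ad F _ x) (LieAlgebra.ad F _ z)
      (LieAlgebra.ad F _ (RCDt g D x)) (RC_ad_commute x z hxz) (RCDt g D).toAddMonoidHom
      (fun a w => RC_Dt_smul D a w) (fun w => by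
        have := RC_Dt_lie D x w
        change ⁅RCDt g D x, w⁆ = RCDt g D ⁅x, w⁆ - ⁅x, RCDt g D w⁆
        rw [this]; abel) hj
  have hcard : Fintype.card ι = finrank F (F ⊗[k] g) :=
    (Module.finrank_eq_card_basis (Algebra.TensorProduct.basis F b)).symm
  have hdim := RC_theta_dim (k := k) (ι ⊕ ι) c
  rw [← hpdef] at hdim
  have hΘr : finrank F Θ = finrank F (LinearMap.range (RCder k F c)) :=
    LinearEquiv.finrank_map_eq ψ _
  have hdimQ : ∀ (s s' : ι → ι ⊕ ι) (ε : MvPolynomial (ι ⊕ ι) k), (∀ l, RCf b l =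
      ε * (RCvec b (MvPolynomial (ι ⊕ ι) k)).symm ⁅RCvec b (MvPolynomial (ι ⊕ ι) k)
        (fun i => MvPolynomial.X (s i)),
        RCvec b (MvPolynomial (ι ⊕ ι) k) (fun i => MvPolynomial.X (s' i))⁆ l) →
      finrank F (F ⊗[k] g) + finrank F (RCQ F (RCvec b F (c ∘ s))) ≤ finrank F Θ := by
    intro s s' ε hf
    have h1 := RC_krull (RCf b) p hp
      (MvPolynomial.aeval c : MvPolynomial (ι ⊕ ι) k →ₐ[k] F).toRingHom rfl
      (fun (j : ℕ) (l : ι) => LinearMap.trace (MvPolynomial (ι ⊕ ι) k) _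
        ((LieAlgebra.ad (MvPolynomial (ι ⊕ ι) k) (MvPolynomial (ι ⊕ ι) k ⊗[k] g)
          (RCvec b (MvPolynomial (ι ⊕ ι) k) (fun i => MvPolynomial.X (s i)))) ^ j *
        LieAlgebra.ad (MvPolynomial (ι ⊕ ι) k) (MvPolynomial (ι ⊕ ι) k ⊗[k] g) (1 ⊗ₜ b l)))
      (by
        intro j
        have := RC_trace_rel b (RCvec b (MvPolynomial (ι ⊕ ι) k) (fun i => MvPolynomial.X (s i)))
          (RCvec b (MvPolynomial (ι ⊕ ι) k) (fun i => MvPolynomial.X (s' i))) j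
        simp only [hf]
        have h2 := congrArg (fun q => ε * q) this
        simp only [Finset.mul_sum, mul_zero] at h2
        rw [← h2]
        exact Finset.sum_congr rfl fun l _ => by ring)
    have h3 := RC_finrank_Q (RCvec b F (c ∘ s)) (Algebra.TensorProduct.basis F b)
    have h4 : (fun (j : ℕ) (l : ι) => LinearMap.trace F _ ((LieAlgebra.ad F (F ⊗[k] g)
        (RCvec b F (c ∘ s))) ^ j * LieAlgebra.ad F (F ⊗[k] g)
          (Algebra.TensorProduct.basis F b l))) =
        (fun (j : ℕ) (l : ι) => (MvPolynomial.aeval c : MvPolynomial (ι ⊕ ι) k →ₐ[k] F).toRingHom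
        (LinearMap.trace (MvPolynomial (ι ⊕ ι) k) _
        ((LieAlgebra.ad (MvPolynomial (ι ⊕ ι) k) (MvPolynomial (ι ⊕ ι) k ⊗[k] g)
          (RCvec b (MvPolynomial (ι ⊕ ι) k) (fun i => MvPolynomial.X (s i)))) ^ j *
        LieAlgebra.ad (MvPolynomial (ι ⊕ ι) k) (MvPolynomial (ι ⊕ ι) k ⊗[k] g) (1 ⊗ₜ b l)))) := by
      funext j l
      have h5 := RC_trace_map b (MvPolynomial.aeval c : MvPolynomial (ι ⊕ ι) k →ₐ[k] F)
        (fun i => MvPolynomial.X (s i)) (Pi.single l 1) j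
      have e1 : (MvPolynomial.aeval c : MvPolynomial (ι ⊕ ι) k →ₐ[k] F) ∘
          (fun i => MvPolynomial.X (s i)) = c ∘ s := by
        ext i; simp
      have e2 : (MvPolynomial.aeval c : MvPolynomial (ι ⊕ ι) k →ₐ[k] F) ∘
          (Pi.single l 1) = (Pi.single l 1 : ι → F) := by
        ext i; by_cases h : i = l
        · subst h; simp
        · simp [h]
      rw [e1, e2, RC_vec_single, RC_vec_single] at h5
      rw [Algebra.TensorProduct.basis_apply]
      exact h5
    rw [h4] at h3
    obtain ⟨ht, hht⟩ : ∃ ht : ℕ, p.height = ht := by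
      have : p.height ≠ ⊤ := by
        intro h
        rw [h, top_add] at h1
        exact absurd h1 (by simp)
      exact ⟨p.height.toNat, (ENat.coe_toNat this).symm⟩
    rw [hht] at h1 hdim
    have h1' := Nat.cast_le (α := ℕ∞).1 (by push_cast; exact h1)
    have hd' := Nat.cast_le (α := ℕ∞).1 (by push_cast; exact hdim)
    rw [Nat.card_eq_fintype_card, Fintype.card_sum] at hd'
    beta_reduce at h1' hd'
    omega
  have hc := hdimQ Sum.inl Sum.inr 1 (fun l => (one_mul _).symm)
  have hc' := hdimQ Sum.inr Sum.inl (-1) (fun l => by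
    rw [← lie_skew, map_neg]; simp [RCf])
  apply RC_algInd
  intro u
  obtain ⟨v, hv⟩ := RC_L4 x y hxy Θ
    (by
      intro q hq
      obtain ⟨D, rfl⟩ := hΘ q hq
      rw [← RC_Dt_lie, hxy, map_zero])
    (by
      intro q hq z h1 h2
      obtain ⟨D, rfl⟩ := hΘ q hq
      exact htr D x z h1 h2)
    (by
      intro q hq z h1 h2
      obtain ⟨D, rfl⟩ := hΘ q hq
      exact htr D y z h1 h2) hc hc' (RCvec b F u)
  obtain ⟨D, hD⟩ := hΘ _ hv
  refine ⟨D, fun i => ?_⟩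
  have h1 := congrArg Prod.fst hD
  simp only at h1
  rw [hx, RC_Dt_vec] at h1
  exact (congrFun ((RCvec b F).injective h1) i).symm

theorem RC_main {k g ι : Type*} [Field k] [CharZero k] [LieRing g] [LieAlgebra k g]
    [FiniteDimensional k g]
    [LieAlgebra.IsKilling k g] [Fintype ι] (b : Basis ι k g) (p : Ideal (MvPolynomial (ι ⊕ ι) k))
    (hp : p ∈ (Ideal.span (Set.range (RCf b))).minimalPrimes) (δ : MvPolynomial ι k)
    (hδ : MvPolynomial.rename Sum.inl δ ∈ p) : δ = 0 := by
  have hpp : p.IsPrime := hp.1.1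
  let F := AlgebraicClosure (FractionRing (MvPolynomial (ι ⊕ ι) k ⧸ p))
  let θ : MvPolynomial (ι ⊕ ι) k →ₐ[k] F :=
    (IsScalarTower.toAlgHom k (MvPolynomial (ι ⊕ ι) k ⧸ p) F).comp (Ideal.Quotient.mkₐ k p)
  let c : ι ⊕ ι → F := fun i => θ (MvPolynomial.X i)
  have hθ : θ = MvPolynomial.aeval c := by
    ext i; simp [c]
  have hinj : Function.Injective (algebraMap (MvPolynomial (ι ⊕ ι) k ⧸ p) F) := by
    rw [IsScalarTower.algebraMap_eq (MvPolynomial (ι ⊕ ι) k ⧸ p)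
      (FractionRing (MvPolynomial (ι ⊕ ι) k ⧸ p)) F]
    rw [RingHom.coe_comp]
    exact (algebraMap (FractionRing (MvPolynomial (ι ⊕ ι) k ⧸ p)) F).injective.comp (IsFractionRing.injective _ _)
  have hker : RingHom.ker (MvPolynomial.aeval c : MvPolynomial (ι ⊕ ι) k →ₐ[k] F) = p := by
    rw [← hθ]
    ext q
    rw [RingHom.mem_ker, ← Ideal.Quotient.eq_zero_iff_mem]
    exact map_eq_zero_iff _ hinj
  have := RC_main_aux b c (hker.symm ▸ hp)
  rw [algebraicIndependent_iff] at this
  apply this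
  rw [← MvPolynomial.aeval_rename]
  rw [← hker] at hδ
  exact hδ

end

section

open Module

/-- Polynomial functions on a vector space. -/
def RCP (k V : Type*) [Field k] [AddCommGroup V] [Module k V] : Subalgebra k (V → k) :=
  Algebra.adjoin k (Set.range fun l : V →ₗ[k] k => (l : V → k))

theorem RC_P_lin {k V : Type*} [Field k] [AddCommGroup V] [Module k V] (l : V →ₗ[k] k) :
    (l : V → k) ∈ RCP k V := Algebra.subset_adjoin ⟨l, rfl⟩

theorem RC_P_aeval {k V ι : Type*} [Field k] [AddCommGroup V] [Module k V]
    (u : ι → V → k) (hu : ∀ i, u i ∈ RCP k V) (F : MvPolynomial ι k) :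
    (fun v => MvPolynomial.aeval (fun i => u i v) F) ∈ RCP k V := by
  induction F using MvPolynomial.induction_on with
  | C a =>
    convert (RCP k V).algebraMap_mem a using 1
    ext v; simp
  | add p q hp hq => 
    convert (RCP k V).add_mem hp hq using 1
    ext v; simp
  | mul_X p i hp => 
    convert (RCP k V).mul_mem hp (hu i) using 1
    ext v; simp

theorem RC_P_iff {k V ι : Type*} [Field k] [AddCommGroup V] [Module k V] [Fintype ι]
    (b : Basis ι k V) (f : V → k) :
    f ∈ RCP k V ↔ ∃ F : MvPolynomial ι k, ∀ v, f v = MvPolynomial.aeval (fun i => b.repr v i) F := by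
  constructor
  · intro hf
    induction hf using Algebra.adjoin_induction with
    | mem f hf =>
      obtain ⟨l, rfl⟩ := hf
      refine ⟨∑ i, MvPolynomial.C (l (b i)) * MvPolynomial.X i, fun v => ?_⟩
      have : l v = ∑ i, b.repr v i * l (b i) := by
        conv_lhs => rw [← b.sum_repr v]
        simp only [map_sum, map_smul, smul_eq_mul]
      refine this.trans ?_
      simp [mul_comm]
    | algebraMap r => exact ⟨MvPolynomial.C r, fun v => by simp⟩
    | add f f' _ _ h h' =>
      obtain ⟨F, hF⟩ := h
      obtain ⟨F', hF'⟩ := h'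
      exact ⟨F + F', fun v => by simp [hF, hF']⟩
    | mul f f' _ _ h h' =>
      obtain ⟨F, hF⟩ := h
      obtain ⟨F', hF'⟩ := h'
      exact ⟨F * F', fun v => by simp [hF, hF']⟩
  · rintro ⟨F, hF⟩
    have : f = fun v => MvPolynomial.aeval (fun i => b.repr v i) F := funext hF
    rw [this]
    exact RC_P_aeval _ (fun i => RC_P_lin (b.coord i)) F

theorem RC_P_comp {k V W : Type*} [Field k] [AddCommGroup V] [Module k V] [AddCommGroup W]
    [Module k W] (A : W → V) (hA : ∀ l : V →ₗ[k] k, (fun w => l (A w)) ∈ RCP k W) (f : V → k)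
    (hf : f ∈ RCP k V) : (fun w => f (A w)) ∈ RCP k W := by
  induction hf using Algebra.adjoin_induction with
  | mem f hf => obtain ⟨l, rfl⟩ := hf; exact hA l
  | algebraMap r => exact (RCP k W).algebraMap_mem r
  | add f f' _ _ h h' => exact (RCP k W).add_mem h h'
  | mul f f' _ _ h h' => exact (RCP k W).mul_mem h h'

theorem RC_P_comp_affine {k V W : Type*} [Field k] [AddCommGroup V] [Module k V] [AddCommGroup W]
    [Module k W] (A : W →ₗ[k] V) (a : V) (f : V → k)
    (hf : f ∈ RCP k V) : (fun w => f (a + A w)) ∈ RCP k W := by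
  apply RC_P_comp _ _ f hf
  intro l
  have := (RCP k W).add_mem ((RCP k W).algebraMap_mem (l a)) (RC_P_lin (l ∘ₗ A))
  convert this using 1
  ext w
  simp

theorem RC_P_mul_ne {k V : Type*} [Field k] [Infinite k] [AddCommGroup V] [Module k V]
    [FiniteDimensional k V] (f f' : V → k) (hf : f ∈ RCP k V) (hf' : f' ∈ RCP k V)
    (h : ∃ v, f v ≠ 0) (h' : ∃ v, f' v ≠ 0) : ∃ v, f v ≠ 0 ∧ f' v ≠ 0 := by
  let b := Module.finBasis k V
  obtain ⟨F, hF⟩ := (RC_P_iff b f).1 hf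
  obtain ⟨F', hF'⟩ := (RC_P_iff b f').1 hf'
  by_contra! hcon
  have hz : F * F' = 0 := by
    apply MvPolynomial.funext
    intro c
    have e : (fun i => b.repr (b.equivFun.symm c) i) = c := by
      ext i
      exact congrFun (b.equivFun.apply_symm_apply c) i
    have h1 := hF (b.equivFun.symm c)
    have h2 := hF' (b.equivFun.symm c)
    rw [e] at h1 h2
    rw [MvPolynomial.aeval_eq_eval] at h1 h2
    rw [map_mul, ← h1, ← h2, map_zero]
    by_cases h0 : f (b.equivFun.symm c) = 0
    · rw [h0, zero_mul]
    · rw [hcon _ h0, mul_zero]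
  rcases mul_eq_zero.1 hz with h0 | h0
  · obtain ⟨v, hv⟩ := h
    exact hv (by rw [hF, h0, map_zero])
  · obtain ⟨v, hv⟩ := h'
    exact hv (by rw [hF', h0, map_zero])

theorem RC_density {k g : Type*} [Field k] [IsAlgClosed k] [CharZero k] [LieRing g]
    [LieAlgebra k g] [FiniteDimensional k g] [LieAlgebra.IsKilling k g] (δ : g → k)
    (hδ : δ ∈ RCP k g) (hδ0 : ∃ v, δ v ≠ 0) (φ : g × g → k) (hφ : φ ∈ RCP k (g × g))
    (h : ∀ x y : g, ⁅x, y⁆ = 0 → δ x ≠ 0 → φ (x, y) = 0) (x y : g) (hxy : ⁅x, y⁆ = 0) :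
    φ (x, y) = 0 := by
  let b := Module.finBasis k g
  obtain ⟨δ', hδ'⟩ := (RC_P_iff b δ).1 hδ
  obtain ⟨φ', hφ'⟩ := (RC_P_iff (b.prod b) φ).1 hφ
  set I := Ideal.span (Set.range (RCf b)) with hI
  let P : (Fin (finrank k g) ⊕ Fin (finrank k g) → k) → g × g := fun c =>
    (b.equivFun.symm (c ∘ Sum.inl), b.equivFun.symm (c ∘ Sum.inr))
  have hP : ∀ c, (fun i => (b.prod b).repr (P c) i) = c := by
    intro c
    ext i
    rcases i with i | i
    · rw [Basis.prod_repr_inl]; exact congrFun (b.equivFun.apply_symm_apply (c ∘ Sum.inl)) i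
    · rw [Basis.prod_repr_inr]; exact congrFun (b.equivFun.apply_symm_apply (c ∘ Sum.inr)) i
  have hP' : ∀ p, P (fun i => (b.prod b).repr p i) = p := by
    intro p
    apply (b.prod b).repr.injective
    ext i
    exact congrFun (hP _) i
  have hfl : ∀ c l, MvPolynomial.aeval c (RCf b l) = b.repr ⁅(P c).1, (P c).2⁆ l := by
    intro c l
    rw [RC_aeval_f, RC_vec_lie]
    simp only [P, Basis.equivFun_symm_apply]
    rw [sum_lie]
    simp [lie_sum, mul_assoc, Finset.mul_sum, Finsupp.finset_sum_apply]
    exact Finset.sum_congr rfl fun _ _ => Finset.sum_congr rfl fun _ _ => by ring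
  have hZ : ∀ c, c ∈ MvPolynomial.zeroLocus k I ↔ ⁅(P c).1, (P c).2⁆ = 0 := by
    intro c
    rw [MvPolynomial.mem_zeroLocus_iff]
    constructor
    · intro hc
      apply b.repr.injective
      ext l
      rw [← hfl, hc _ (Ideal.subset_span ⟨l, rfl⟩)]; simp
    · intro hc q hq
      have : I ≤ RingHom.ker (MvPolynomial.aeval c : MvPolynomial _ k →ₐ[k] k) := by
        rw [hI, Ideal.span_le]
        rintro _ ⟨l, rfl⟩
        change MvPolynomial.aeval c (RCf b l) = 0
        rw [hfl, hc]; simp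
      exact this hq
  have hmem : MvPolynomial.rename Sum.inl δ' * φ' ∈ I.radical := by
    rw [← MvPolynomial.vanishingIdeal_zeroLocus_eq_radical (K := k) I,
      MvPolynomial.mem_vanishingIdeal_iff]
    intro c hc
    rw [map_mul, MvPolynomial.aeval_rename]
    have h1 := hφ' (P c)
    rw [hP] at h1
    have h2 := hδ' (P c).1
    have e : (fun i => b.repr (P c).1 i) = c ∘ Sum.inl :=
      b.equivFun.apply_symm_apply (c ∘ Sum.inl)
    rw [e] at h2
    rw [← h1, ← h2]
    by_cases h0 : δ (P c).1 = 0
    · rw [h0, zero_mul]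
    · have := h _ _ ((hZ c).1 hc) h0
      rw [show P c = ((P c).1, (P c).2) from rfl, this, mul_zero]
  have hδ'0 : δ' ≠ 0 := by
    rintro rfl
    obtain ⟨v, hv⟩ := hδ0
    exact hv (by rw [hδ', map_zero])
  have hmem' : φ' ∈ I.radical := by
    rw [← Ideal.sInf_minimalPrimes, Ideal.mem_sInf]
    intro p hp
    have hpp : p.IsPrime := hp.1.1
    have : I.radical ≤ p := hpp.radical_le_iff.2 hp.1.2
    rcases hpp.mem_or_mem (this hmem) with h0 | h0
    · exact absurd (RC_main b p hp δ' h0) hδ'0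
    · exact h0
  rw [← MvPolynomial.vanishingIdeal_zeroLocus_eq_radical (K := k) I,
      MvPolynomial.mem_vanishingIdeal_iff] at hmem'
  rw [hφ']
  apply hmem'
  rw [hZ, hP']
  exact hxy

end

section

open Module

theorem RC_P_sum {k V ι : Type*} [Field k] [AddCommGroup V] [Module k V] (s : Finset ι)
    (u : ι → V → k) (hu : ∀ i ∈ s, u i ∈ RCP k V) : (fun v => ∑ i ∈ s, u i v) ∈ RCP k V := by
  have := (RCP k V).sum_mem hu
  convert this using 1
  ext v
  simp

theorem RC_P_det {k V : Type*} [Field k] [AddCommGroup V] [Module k V] {m : Type*} [Fintype m]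
    [DecidableEq m]
    (M : V → Matrix m m k) (hM : ∀ i j, (fun v => M v i j) ∈ RCP k V) :
    (fun v => (M v).det) ∈ RCP k V := by
  let N : Matrix m m (RCP k V) := Matrix.of fun i j => ⟨fun v => M v i j, hM i j⟩
  have h := N.det.2
  convert h using 1
  ext v
  let ev : RCP k V →+* k := (Pi.evalRingHom (fun _ : V => k) v).comp (RCP k V).val.toRingHom
  have := ev.map_det N
  change _ = ev N.det
  rw [this]
  rfl

theorem RC_P_pow {k V : Type*} [Field k] [AddCommGroup V] [Module k V] {m : Type*} [Fintype m]
    [DecidableEq m]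
    (M : V → Matrix m m k) (hM : ∀ i j, (fun v => M v i j) ∈ RCP k V) (q : ℕ) :
    ∀ i j, (fun v => ((M v) ^ q) i j) ∈ RCP k V := by
  induction q with
  | zero =>
    intro i j
    simp only [pow_zero]
    exact (RCP k V).algebraMap_mem ((1 : Matrix m m k) i j)
  | succ q ih =>
    intro i j
    simp only [pow_succ, Matrix.mul_apply]
    exact RC_P_sum _ _ fun l _ => (RCP k V).mul_mem (ih i l) (hM l j)

theorem RC_P_ad {k L ι : Type*} [Field k] [LieRing L] [LieAlgebra k L] [Fintype ι]
    (b : Basis ι k L) (z : L) (i : ι) : (fun x : L => b.repr ⁅x, z⁆ i) ∈ RCP k L := by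
  have := RC_P_lin (b.coord i ∘ₗ (-(LieAlgebra.ad k L z : L →ₗ[k] L)))
  convert this using 1
  ext x
  have : ⁅x, z⁆ = -⁅z, x⁆ := (lie_skew x z).symm
  rw [this]
  simp only [map_neg, Finsupp.coe_neg, Pi.neg_apply]
  simp [-lie_skew]

theorem RC_P_trace {k L ι : Type*} [Field k] [LieRing L] [LieAlgebra k L] [Fintype ι]
    [DecidableEq ι]
    (b : Basis ι k L) (z : L) (j : ℕ) :
    (fun x : L => LinearMap.trace k L ((LieAlgebra.ad k L x) ^ j * LieAlgebra.ad k L z)) ∈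
      RCP k L := by
  have h1 := RC_P_pow (fun x : L => LinearMap.toMatrix b b (LieAlgebra.ad k L x)) (by
    intro i l
    simp only [LinearMap.toMatrix_apply]
    exact RC_P_ad b (b l) i) j
  have : (fun x : L => LinearMap.trace k L ((LieAlgebra.ad k L x) ^ j * LieAlgebra.ad k L z)) =
      fun x => ∑ i, ∑ l, ((LinearMap.toMatrix b b (LieAlgebra.ad k L x)) ^ j) i l *
        (LinearMap.toMatrix b b (LieAlgebra.ad k L z)) l i := by
    ext x
    rw [LinearMap.trace_eq_matrix_trace k b, LinearMap.toMatrix_mul, LinearMap.toMatrix_pow]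
    simp [Matrix.trace, Matrix.mul_apply]
  rw [this]
  exact RC_P_sum _ _ fun i _ => RC_P_sum _ _ fun l _ =>
    (RCP k L).mul_mem (h1 i l) ((RCP k L).algebraMap_mem _)

theorem RC_ker_minor {k V : Type*} [Field k] [AddCommGroup V] [Module k V] [FiniteDimensional k V]
    {m : ℕ} (ψ : Fin m → V →ₗ[k] k) (v : Fin m → V)
    (hd : (Matrix.of fun i j => ψ i (v j)).det ≠ 0) (S : Submodule k V)
    (hS : ∀ z ∈ S, ∀ i, ψ i z = 0) : finrank k S + m ≤ finrank k V := by
  let T : V →ₗ[k] (Fin m → k) := LinearMap.pi ψ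
  have hsurj : Function.Surjective T := by
    intro c
    set M := Matrix.of fun i j => ψ i (v j)
    have hu : IsUnit M.det := isUnit_iff_ne_zero.2 hd
    refine ⟨∑ j, (M⁻¹.mulVec c) j • v j, ?_⟩
    have h1 : M.mulVec (M⁻¹.mulVec c) = c := by
      rw [Matrix.mulVec_mulVec, Matrix.mul_nonsing_inv _ hu, Matrix.one_mulVec]
    rw [← h1]
    ext i
    rw [h1]
    simp only [T, LinearMap.pi_apply, map_sum, map_smul, smul_eq_mul]
    conv_rhs => rw [← h1]
    simp [Matrix.mulVec, dotProduct, M, mul_comm]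
  have hr : finrank k (LinearMap.range T) = m := by
    rw [LinearMap.range_eq_top.2 hsurj, finrank_top]; simp
  have := LinearMap.finrank_range_add_finrank_ker T
  have hle : S ≤ LinearMap.ker T := by
    intro z hz
    ext i
    exact hS z hz i
  have := Submodule.finrank_mono hle
  omega

theorem RC_lin_minor {k V ι : Type*} [Field k] [AddCommGroup V] [Module k V]
    [FiniteDimensional k V] [Fintype ι] [DecidableEq ι] (b : Basis ι k V) (A : V →ₗ[k] V) (m : ℕ)
    (hm : finrank k (LinearMap.ker A) + m = finrank k V) :
    ∃ (a c : Fin m → ι), (Matrix.of fun i j => b.repr (A (b (c j))) (a i)).det ≠ 0 := by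
  apply RC_exists_minor (fun i l => b.repr (A (b l)) i)
  have h1 := LinearMap.finrank_range_add_finrank_ker A
  have h2 : (LinearMap.toMatrix b b A).rank = finrank k (LinearMap.range A) := by
    rw [Matrix.rank_eq_finrank_range_toLin _ b b, Matrix.toLin_toMatrix]
  rw [Matrix.rank_eq_finrank_span_row] at h2
  have e : (Set.range fun i l => b.repr (A (b l)) i) =
    Set.range (LinearMap.toMatrix b b A).row := by
    congr 1
    ext i l
    simp [LinearMap.toMatrix_apply]
  rw [e, h2]
  omega

/-- there is `h` with `H ≤ Q_h`. -/
theorem RC_exists_h {k L : Type*} [Field k] [IsAlgClosed k] [CharZero k] [LieRing L]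
    [LieAlgebra k L] [FiniteDimensional k L] [LieAlgebra.IsKilling k L] (H : LieSubalgebra k L)
    [H.IsCartanSubalgebra] : ∃ h ∈ H, ∀ w ∈ H, w ∈ RCQ k h := by
  classical
  obtain ⟨h, hh⟩ := Module.Dual.exists_forall_ne_zero_of_forall_exists (K := k) (M := H)
    (ι := {p : LieModule.Weight k H L × LieModule.Weight k H L // p.1 ≠ p.2})
    (fun p => p.1.1.toLinear - p.1.2.toLinear) (by
      rintro ⟨⟨α, β⟩, hne⟩
      by_contra! hcon
      apply hne
      apply LieModule.Weight.ext
      intro x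
      simpa [sub_eq_zero] using hcon x)
  have hinj : Set.InjOn (fun χ : LieModule.Weight k H L => χ h)
      (Finset.univ : Finset (LieModule.Weight k H L)) := by
    intro α _ β _ hab
    by_contra hne
    apply hh ⟨(α, β), hne⟩
    simpa [sub_eq_zero] using hab
  refine ⟨h, h.2, fun w hw => ?_⟩
  let p := Lagrange.interpolate Finset.univ (fun χ : LieModule.Weight k H L => χ h)
    (fun χ => χ ⟨w, hw⟩)
  refine ⟨p, ?_⟩
  have key : Polynomial.aeval (LieAlgebra.ad k L (h : L)) p = LieAlgebra.ad k L w := by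
    ext z
    have hz : z ∈ ⨆ χ : LieModule.Weight k H L, LieModule.genWeightSpace L χ := by
      rw [LieModule.iSup_genWeightSpace_eq_top' k H L]; trivial
    rw [← LieSubmodule.mem_toSubmodule, LieSubmodule.iSup_toSubmodule] at hz
    induction hz using Submodule.iSup_induction' with
    | mem χ z hz =>
      have e1 : ∀ u : H, LieAlgebra.ad k L (u : L) z = χ u • z := fun u =>
        LieAlgebra.IsKilling.lie_eq_smul_of_mem_rootSpace hz u
      have e2 : Polynomial.aeval (LieAlgebra.ad k L (h : L)) p z = (p.eval (χ h)) • z := by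
        by_cases hz0 : z = 0
        · rw [hz0]; simp
        · exact Module.End.aeval_apply_of_hasEigenvector
            ⟨Module.End.mem_eigenspace_iff.2 (e1 h), hz0⟩
      rw [e2, e1 ⟨w, hw⟩]
      rw [Lagrange.eval_interpolate_at_node _ hinj (Finset.mem_univ χ)]
    | zero => simp
    | add a c _ _ ha hc => rw [map_add, map_add, ha, hc]
  intro z
  rw [key]
  rfl

theorem RC_cent_h {k L : Type*} [Field k] [IsAlgClosed k] [CharZero k] [LieRing L]
    [LieAlgebra k L] [FiniteDimensional k L] [LieAlgebra.IsKilling k L] (H : LieSubalgebra k L)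
    [H.IsCartanSubalgebra] (h : L) (hh : h ∈ H) (hQ : ∀ w ∈ H, w ∈ RCQ k h) :
    LinearMap.ker (LieAlgebra.ad k L h) = H.toSubmodule := by
  ext z
  rw [LinearMap.mem_ker, LieAlgebra.ad_apply]
  constructor
  · intro hz
    have : z ∈ H.normalizer := by
      rw [LieSubalgebra.mem_normalizer_iff']
      intro y hy
      rw [RC_Q_comm h y z (hQ y hy) hz]
      exact H.zero_mem
    rwa [LieSubalgebra.IsCartanSubalgebra.self_normalizing] at this
  · intro hz
    have := LieAlgebra.IsKilling.instIsLieAbelianOfIsCartanSubalgebra k L H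
    have h2 : ⁅(⟨h, hh⟩ : H), (⟨z, hz⟩ : H)⁆ = 0 := trivial_lie_zero _ _ _ _
    exact congrArg Subtype.val h2

theorem RC_cent_ge {k L : Type*} [Field k] [IsAlgClosed k] [CharZero k] [LieRing L]
    [LieAlgebra k L] [FiniteDimensional k L] [LieAlgebra.IsKilling k L] (H : LieSubalgebra k L)
    [H.IsCartanSubalgebra] (x0 : L) :
    finrank k H ≤ finrank k (LinearMap.ker (LieAlgebra.ad k L x0)) := by
  classical
  obtain ⟨h, hh, hQ⟩ := RC_exists_h (k := k) H
  let b := finBasis k L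
  obtain ⟨a, c, hac⟩ := RC_exists_minor (fun (j : ℕ) l =>
      LinearMap.trace k L ((LieAlgebra.ad k L h) ^ j * LieAlgebra.ad k L (b l))) rfl
  have h1 := RC_finrank_Q (F := k) h b
  have h2 : finrank k H ≤ finrank k (RCQ k h) :=
    Submodule.finrank_mono (s := H.toSubmodule) (t := RCQ k h) hQ
  generalize finrank k (Submodule.span k (Set.range fun (j : ℕ) (l : Fin (finrank k L)) =>
      LinearMap.trace k L ((LieAlgebra.ad k L h) ^ j * LieAlgebra.ad k L (b l)))) = m at *
  obtain ⟨a', c', hac'⟩ := RC_lin_minor b (LieAlgebra.ad k L x0)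
    (finrank k L - finrank k (LinearMap.ker (LieAlgebra.ad k L x0)))
    (Nat.add_sub_of_le (Submodule.finrank_le _))
  obtain ⟨x, hx1, hx2⟩ := RC_P_mul_ne
    (fun x : L => (Matrix.of fun i j => LinearMap.trace k L
      ((LieAlgebra.ad k L x) ^ (a i) * LieAlgebra.ad k L (b (c j)))).det)
    (fun x : L => (Matrix.of fun i j => b.repr (LieAlgebra.ad k L x (b (c' j))) (a' i)).det)
    (RC_P_det _ fun i j => RC_P_trace b _ _) (RC_P_det _ fun i j => RC_P_ad b _ _)
    ⟨h, hac⟩ ⟨x0, hac'⟩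
  have h3 := RC_ker_minor (fun i => LinearMap.trace k L ∘ₗ
    LinearMap.mulLeft k ((LieAlgebra.ad k L x) ^ (a i)) ∘ₗ (LieAlgebra.ad k L : L →ₗ[k] Module.End k L))
    (fun j => b (c j)) hx1
    (LinearMap.BilinForm.orthogonal (killingForm k L) (RCQ k x))
    (fun z hz i => (RC_Q_orth x z).1 hz (a i))
  have h4 := RC_ker_minor (fun i => b.coord (a' i) ∘ₗ (LieAlgebra.ad k L x))
    (fun j => b (c' j)) hx2 (LinearMap.ker (LieAlgebra.ad k L x))
    (fun z hz i => by
      rw [LinearMap.comp_apply, LinearMap.mem_ker.1 hz, map_zero])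
  have h5 := LinearMap.BilinForm.finrank_orthogonal (RC_killing_nondeg k L) (RCQ k x)
  have h6 : finrank k (RCQ k x) ≤ finrank k (LinearMap.ker (LieAlgebra.ad k L x)) := by
    apply Submodule.finrank_mono
    intro u hu
    rw [LinearMap.mem_ker, LieAlgebra.ad_apply, ← lie_skew, RC_Q_comm x u x hu (lie_self x),
      neg_zero]
  have h7 := Submodule.finrank_le (RCQ k x)
  have h8 := Submodule.finrank_le (LinearMap.ker (LieAlgebra.ad k L x0))
  omega

end

section

open Module

/-- The quotient map by the centre. -/
def RCpi (k g : Type*) [Field k] [LieRing g] [LieAlgebra k g] :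
    g →ₗ⁅k⁆ g ⧸ LieAlgebra.center k g :=
  { (LieAlgebra.center k g).toSubmodule.mkQ with map_lie' := rfl }

theorem RC_pi_surj (k g : Type*) [Field k] [LieRing g] [LieAlgebra k g] :
    Function.Surjective (RCpi k g) := Submodule.mkQ_surjective _

theorem RC_pi_zero (k g : Type*) [Field k] [LieRing g] [LieAlgebra k g] (x : g) :
    RCpi k g x = 0 ↔ x ∈ LieAlgebra.center k g :=
  Submodule.Quotient.mk_eq_zero (LieAlgebra.center k g).toSubmodule

theorem RC_mem_center (k g : Type*) [Field k] [LieRing g] [LieAlgebra k g] (x : g) :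
    x ∈ LieAlgebra.center k g ↔ ∀ y : g, ⁅x, y⁆ = 0 := by
  rw [LieModule.mem_maxTrivSubmodule]
  exact forall_congr' fun y => by rw [← lie_skew, neg_eq_zero]

theorem RC_quot_killing {k g : Type*} [Field k] [IsAlgClosed k] [CharZero k] [LieRing g]
    [LieAlgebra k g] [FiniteDimensional k g]
    (hred : LieAlgebra.radical k g = LieAlgebra.center k g) :
    LieAlgebra.IsKilling k (g ⧸ LieAlgebra.center k g) := by
  have : LieAlgebra.HasTrivialRadical k (g ⧸ LieAlgebra.center k g) := by
    rw [LieAlgebra.hasTrivialRadical_iff_no_abelian_ideals]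
    intro I hI
    let J : LieIdeal k g := I.comap (RCpi k g)
    have hJ1 : ⁅J, J⁆ ≤ LieAlgebra.center k g := by
      rw [LieSubmodule.lie_le_iff]
      intro x hx m hm
      rw [← RC_pi_zero, LieHom.map_lie]
      have hx' : RCpi k g x ∈ I := LieIdeal.mem_comap.1 hx
      have hm' : RCpi k g m ∈ I := LieIdeal.mem_comap.1 hm
      have := trivial_lie_zero I I ⟨_, hx'⟩ ⟨_, hm'⟩
      exact congrArg Subtype.val this
    have hJ2 : ⁅⁅J, J⁆, ⁅J, J⁆⁆ ≤ ⊥ := by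
      rw [LieSubmodule.lie_le_iff]
      intro x hx m hm
      rw [(RC_mem_center k g x).1 (hJ1 hx)]
      exact LieSubmodule.zero_mem _
    have hsol : LieAlgebra.IsSolvable J := by
      apply LieAlgebra.IsSolvable.mk (R := k) (k := 2)
      rw [LieIdeal.derivedSeries_eq_bot_iff, LieAlgebra.derivedSeriesOfIdeal_succ,
        LieAlgebra.derivedSeriesOfIdeal_succ, LieAlgebra.derivedSeriesOfIdeal_zero]
      exact le_bot_iff.1 hJ2
    rw [LieAlgebra.LieIdeal.solvable_iff_le_radical k, hred] at hsol
    rw [eq_bot_iff]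
    intro y hy
    obtain ⟨x, rfl⟩ := RC_pi_surj k g y
    have : x ∈ J := LieIdeal.mem_comap.2 hy
    rw [LieSubmodule.mem_bot, RC_pi_zero]
    exact hsol this
  infer_instance

theorem RC_lie_central {k g L : Type*} [Field k] [LieRing g] [CharZero k]
    [LieAlgebra k g] [LieRing L] [LieAlgebra k L] [FiniteDimensional k L] [LieAlgebra.IsKilling k L]
    (π : g →ₗ⁅k⁆ L) (σ : L →ₗ[k] g) (hσ : ∀ a, π (σ a) = a)
    (hker : ∀ x, π x = 0 → ∀ y : g, ⁅x, y⁆ = 0) (x y : g) (hxy : π ⁅x, y⁆ = 0) : ⁅x, y⁆ = 0 := by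
  rw [← Module.forall_dual_apply_eq_zero_iff k]
  intro ℓ
  have hl : ∀ x x' y : g, π x = π x' → ⁅x, y⁆ = ⁅x', y⁆ := by
    intro x x' y h
    rw [← sub_eq_zero, ← sub_lie]
    exact hker _ (by rw [map_sub, h, sub_self]) y
  have hr : ∀ x y y' : g, π y = π y' → ⁅x, y⁆ = ⁅x, y'⁆ := by
    intro x y y' h
    rw [← lie_skew, hl y y' x h, lie_skew]
  let ω : L →ₗ[k] Module.Dual k L := LinearMap.mk₂ k (fun a b => ℓ ⁅σ a, σ b⁆)
    (by intros; simp) (by intros; simp) (by intros; simp) (by intros; simp)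
  let D0 : L →ₗ[k] L :=
    ((killingForm k L).toDual (RC_killing_nondeg k L)).symm.toLinearMap ∘ₗ ω
  have hD0 : ∀ a b, killingForm k L (D0 a) b = ℓ ⁅σ a, σ b⁆ := by
    intro a b
    exact LinearMap.BilinForm.apply_toDual_symm_apply (hB := RC_killing_nondeg k L) (ω a) b
  have hsl : ∀ a b c, ⁅σ ⁅a, b⁆, σ c⁆ = ⁅⁅σ a, σ b⁆, σ c⁆ := by
    intro a b c
    apply hl
    rw [hσ, LieHom.map_lie, hσ, hσ]
  have hsr : ∀ a b c, ⁅σ a, σ ⁅b, c⁆⁆ = ⁅σ a, ⁅σ b, σ c⁆⁆ := by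
    intro a b c
    apply hr
    rw [hσ, LieHom.map_lie, hσ, hσ]
  have hinv : ∀ a b c : L, killingForm k L ⁅a, b⁆ c = killingForm k L a ⁅b, c⁆ :=
    fun a b c => LieModule.traceForm_apply_lie_apply k L L a b c
  let D : LieDerivation k L L := ⟨D0, by
    intro a b
    rw [← sub_eq_zero]
    apply (RC_killing_nondeg k L).1
    intro c
    rw [map_sub, map_sub, LinearMap.sub_apply, LinearMap.sub_apply, hD0, hsl,
      ← lie_skew a (D0 b), ← lie_skew b (D0 a), map_neg, map_neg, LinearMap.neg_apply,
      LinearMap.neg_apply, hinv, hinv, hD0, hD0, hsr, hsr, leibniz_lie (σ a) (σ b) (σ c), map_add]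
    ring⟩
  obtain ⟨d, hd⟩ := LieDerivation.IsKilling.exists_eq_ad D
  have h1 : ⁅x, y⁆ = ⁅σ (π x), σ (π y)⁆ := by
    rw [hl x (σ (π x)) y (by rw [hσ]), hr _ y (σ (π y)) (by rw [hσ])]
  have h2 : D0 (π x) = ⁅d, π x⁆ := by
    have := LieDerivation.congr_fun hd (π x)
    rw [LieDerivation.ad_apply_apply] at this
    exact this.symm
  rw [h1, ← hD0, h2, hinv, ← LieHom.map_lie, hxy, map_zero]

theorem RC_finrank_comap {k V W : Type*} [Field k] [AddCommGroup V] [Module k V]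
    [AddCommGroup W] [Module k W] [FiniteDimensional k V] (π : V →ₗ[k] W)
    (hπ : Function.Surjective π) (S : Submodule k W) :
    finrank k (S.comap π) = finrank k S + finrank k (LinearMap.ker π) := by
  let f : S.comap π →ₗ[k] S := π.restrict (fun x hx => hx)
  have hf : Function.Surjective f := by
    rintro ⟨w, hw⟩
    obtain ⟨v, rfl⟩ := hπ w
    exact ⟨⟨v, hw⟩, rfl⟩
  have h1 := LinearMap.finrank_range_add_finrank_ker f
  rw [LinearMap.range_eq_top.2 hf, finrank_top] at h1
  rw [← h1]
  congr 1
  have h2 : (LinearMap.ker f).map (S.comap π).subtype = LinearMap.ker π := by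
    ext v
    simp only [Submodule.mem_map, LinearMap.mem_ker]
    constructor
    · rintro ⟨u, hu, rfl⟩
      exact congrArg Subtype.val hu
    · intro hv
      exact ⟨⟨v, by simp [hv]⟩, Subtype.ext hv, rfl⟩
  rw [← h2]
  exact (LinearEquiv.finrank_eq (Submodule.equivMapOfInjective _ (Submodule.injective_subtype _) _))

theorem RC_cartan_map {k g L : Type*} [Field k] [LieRing g] 
    [LieAlgebra k g] [LieRing L] [LieAlgebra k L] 
    (π : g →ₗ⁅k⁆ L) (hπ : Function.Surjective π)
    (hker : ∀ x, π x = 0 → ∀ y : g, ⁅x, y⁆ = 0) (t : LieSubalgebra k g) (ht : t.IsCartanSubalgebra) :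
    (t.map π).IsCartanSubalgebra ∧ t.toSubmodule = (t.map π).toSubmodule.comap (π : g →ₗ[k] L) := by
  have hz : ∀ x, π x = 0 → x ∈ t := by
    intro x hx
    have : x ∈ t.normalizer := by
      rw [LieSubalgebra.mem_normalizer_iff]
      intro y hy
      rw [hker x hx]
      exact t.zero_mem
    rwa [ht.self_normalizing] at this
  have hc : ∀ x, π x ∈ t.map π → x ∈ t := by
    intro x hx
    obtain ⟨y, hy, hxy⟩ := (LieSubalgebra.mem_map _ _ _).1 hx
    have : x = y + (x - y) := by abel
    rw [this]
    exact t.add_mem hy (hz _ (by rw [map_sub, hxy]; exact sub_self _))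
  constructor
  · constructor
    · have := ht.nilpotent
      let f : t →ₗ⁅k⁆ t.map π :=
        { toFun := fun x => ⟨π x, (LieSubalgebra.mem_map _ _ _).2 ⟨x, x.2, rfl⟩⟩
          map_add' := by intros; ext; simp
          map_smul' := by intros; ext; simp
          map_lie' := by intros; ext; simp }
      have hf : Function.Surjective f := by
        rintro ⟨y, hy⟩
        obtain ⟨x, hx, rfl⟩ := (LieSubalgebra.mem_map _ _ _).1 hy
        exact ⟨⟨x, hx⟩, rfl⟩
      exact hf.lieAlgebra_isNilpotent
    · apply le_antisymm _ (LieSubalgebra.le_normalizer _)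
      intro y hy
      obtain ⟨x, rfl⟩ := hπ y
      refine (LieSubalgebra.mem_map _ _ _).2 ⟨x, ?_, rfl⟩
      rw [← ht.self_normalizing, LieSubalgebra.mem_normalizer_iff]
      intro u hu
      apply hc
      rw [LieHom.map_lie]
      exact (LieSubalgebra.mem_normalizer_iff _ _).1 hy _ ((LieSubalgebra.mem_map _ _ _).2 ⟨u, hu, rfl⟩)
  · ext x
    exact ⟨fun hx => (LieSubalgebra.mem_map _ _ _).2 ⟨x, hx, rfl⟩, hc x⟩

theorem RC_red_section {k g : Type*} [Field k] [LieRing g] [LieAlgebra k g] :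
    ∃ σ : (g ⧸ LieAlgebra.center k g) →ₗ[k] g, ∀ a, RCpi k g (σ a) = a := by
  obtain ⟨σ, hσ⟩ := LinearMap.exists_rightInverse_of_surjective
    (RCpi k g : g →ₗ[k] g ⧸ LieAlgebra.center k g) (LinearMap.range_eq_top.2 (RC_pi_surj k g))
  exact ⟨σ, fun a => LinearMap.congr_fun hσ a⟩

theorem RC_red_comm {k g : Type*} [Field k] [IsAlgClosed k] [CharZero k] [LieRing g]
    [LieAlgebra k g] [FiniteDimensional k g]
    (hred : LieAlgebra.radical k g = LieAlgebra.center k g) (x y : g) :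
    ⁅x, y⁆ = 0 ↔ ⁅RCpi k g x, RCpi k g y⁆ = 0 := by
  have := RC_quot_killing hred
  obtain ⟨σ, hσ⟩ := RC_red_section (k := k) (g := g)
  constructor
  · intro h
    rw [← LieHom.map_lie, h, map_zero]
  · intro h
    exact RC_lie_central (RCpi k g) σ hσ
      (fun x hx => (RC_mem_center k g x).1 ((RC_pi_zero k g x).1 hx)) x y
      (by rw [LieHom.map_lie, h])

theorem RC_red_ker {k g : Type*} [Field k] [IsAlgClosed k] [CharZero k] [LieRing g]
    [LieAlgebra k g] [FiniteDimensional k g]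
    (hred : LieAlgebra.radical k g = LieAlgebra.center k g) (x : g) :
    LinearMap.ker (LieAlgebra.ad k g x) =
      (LinearMap.ker (LieAlgebra.ad k _ (RCpi k g x))).comap
        (RCpi k g : g →ₗ[k] g ⧸ LieAlgebra.center k g) := by
  ext y
  exact RC_red_comm hred x y

theorem RC_red_rank {k g : Type*} [Field k] [IsAlgClosed k] [CharZero k] [LieRing g]
    [LieAlgebra k g] [FiniteDimensional k g]
    (hred : LieAlgebra.radical k g = LieAlgebra.center k g)
    (t : LieSubalgebra k g) (ht : t.IsCartanSubalgebra) :
    (∀ x, finrank k t ≤ finrank k (LinearMap.ker (LieAlgebra.ad k g x))) ∧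
    ∃ h, finrank k (LinearMap.ker (LieAlgebra.ad k g h)) = finrank k t := by
  have := RC_quot_killing hred
  obtain ⟨hc, htc⟩ := RC_cartan_map (RCpi k g) (RC_pi_surj k g)
    (fun x hx => (RC_mem_center k g x).1 ((RC_pi_zero k g x).1 hx)) t ht
  have hdt : finrank k t = finrank k (t.map (RCpi k g)) +
      finrank k (LinearMap.ker (RCpi k g : g →ₗ[k] g ⧸ LieAlgebra.center k g)) := by
    have := RC_finrank_comap (RCpi k g : g →ₗ[k] g ⧸ LieAlgebra.center k g) (RC_pi_surj k g)
      (t.map (RCpi k g)).toSubmodule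
    rw [← htc] at this
    exact this
  have hdx : ∀ x, finrank k (LinearMap.ker (LieAlgebra.ad k g x)) =
      finrank k (LinearMap.ker (LieAlgebra.ad k _ (RCpi k g x))) +
      finrank k (LinearMap.ker (RCpi k g : g →ₗ[k] g ⧸ LieAlgebra.center k g)) := by
    intro x
    rw [RC_red_ker hred, RC_finrank_comap _ (RC_pi_surj k g)]
  constructor
  · intro x
    rw [hdt, hdx]
    have := RC_cent_ge (k := k) (t.map (RCpi k g)) (RCpi k g x)
    omega
  · obtain ⟨h, hh, hQ⟩ := RC_exists_h (k := k) (t.map (RCpi k g))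
    obtain ⟨h', rfl⟩ := RC_pi_surj k g h
    refine ⟨h', ?_⟩
    rw [hdt, hdx, RC_cent_h _ _ hh hQ]
    rfl

theorem RC_red_density {k g : Type*} [Field k] [IsAlgClosed k] [CharZero k] [LieRing g]
    [LieAlgebra k g] [FiniteDimensional k g]
    (hred : LieAlgebra.radical k g = LieAlgebra.center k g) (δ : g → k)
    (hδ : δ ∈ RCP k g) (hδ0 : ∃ v, δ v ≠ 0)
    (hinv : ∀ x z, z ∈ LieAlgebra.center k g → δ (x + z) = δ x)
    (φ : g × g → k) (hφ : φ ∈ RCP k (g × g))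
    (h : ∀ x y : g, ⁅x, y⁆ = 0 → δ x ≠ 0 → φ (x, y) = 0) (x y : g) (hxy : ⁅x, y⁆ = 0) :
    φ (x, y) = 0 := by
  have := RC_quot_killing hred
  obtain ⟨σ, hσ⟩ := RC_red_section (k := k) (g := g)
  have hinv' : ∀ u v, RCpi k g u = RCpi k g v → δ u = δ v := by
    intro u v huv
    rw [← hinv v (u - v) (by rw [← RC_pi_zero, map_sub, huv, sub_self])]
    congr 1
    abel
  have key := RC_density (fun a => δ (0 + σ a)) (RC_P_comp_affine σ 0 δ hδ) (by
      obtain ⟨v, hv⟩ := hδ0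
      refine ⟨RCpi k g v, ?_⟩
      rw [zero_add, hinv' (σ (RCpi k g v)) v (hσ _)]
      exact hv)
    (fun w => φ ((x - σ (RCpi k g x), y - σ (RCpi k g y)) + (σ.prodMap σ) w))
    (RC_P_comp_affine (σ.prodMap σ) (x - σ (RCpi k g x), y - σ (RCpi k g y)) φ hφ) (by
      intro a b hab ha
      change φ (x - σ (RCpi k g x) + σ a, y - σ (RCpi k g y) + σ b) = 0
      apply h
      · rw [RC_red_comm hred]
        simpa [map_sub, map_add, hσ] using hab
      · rw [hinv' _ (0 + σ a) (by simp [hσ])]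
        exact ha) (RCpi k g x) (RCpi k g y) ((RC_red_comm hred x y).1 hxy)
  simpa using key

end

section

open Module

theorem RC_evalP_iff {k V : Type*} [Field k] [AddCommGroup V] [Module k V] [FiniteDimensional k V]
    (f : V → k) : f ∈ RCP k V ↔ ∃ F, ∀ v, f v = CV.evalP k V F v :=
  RC_P_iff (Module.Free.chooseBasis k V) f

theorem RC_zar_isOpen {k V : Type*} [Field k] [AddCommGroup V] [Module k V] [FiniteDimensional k V]
    (f : V → k) (hf : f ∈ RCP k V) : @IsOpen V (CV.zar k V) {z | f z ≠ 0} := by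
  obtain ⟨F, hF⟩ := (RC_evalP_iff f).1 hf
  apply TopologicalSpace.GenerateOpen.basic
  exact ⟨F, by simp only [hF]⟩

theorem RC_zar_nhd {k V : Type*} [Field k] [AddCommGroup V] [Module k V] [FiniteDimensional k V]
    (O : Set V) (hO : @IsOpen V (CV.zar k V) O) (z : V) (hz : z ∈ O) :
    ∃ f ∈ RCP k V, f z ≠ 0 ∧ ∀ w, f w ≠ 0 → w ∈ O := by
  change TopologicalSpace.GenerateOpen _ O at hO
  induction hO with
  | basic s hs =>
    obtain ⟨F, rfl⟩ := hs
    exact ⟨fun v => CV.evalP k V F v, (RC_evalP_iff _).2 ⟨F, fun _ => rfl⟩, hz, fun w hw => hw⟩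
  | univ => exact ⟨1, (RCP k V).one_mem, by simp, fun _ _ => trivial⟩
  | inter s t _ _ hs ht =>
    obtain ⟨f, hf, hfz, hfo⟩ := hs hz.1
    obtain ⟨f', hf', hfz', hfo'⟩ := ht hz.2
    refine ⟨f * f', (RCP k V).mul_mem hf hf', mul_ne_zero hfz hfz', fun w hw => ?_⟩
    exact ⟨hfo w (left_ne_zero_of_mul hw), hfo' w (right_ne_zero_of_mul hw)⟩
  | sUnion S _ hS =>
    obtain ⟨s, hs, hzs⟩ := hz
    obtain ⟨f, hf, hfz, hfo⟩ := hS s hs hzs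
    exact ⟨f, hf, hfz, fun w hw => ⟨s, hs, hfo w hw⟩⟩

theorem RC_extend {m r n : ℕ} (hn : r + m = n) (c : Fin m → Fin n) (hc : Function.Injective c) :
    ∃ e : Fin m ⊕ Fin r ≃ Fin n, ∀ j, e (Sum.inl j) = c j := by
  classical
  have hcard : Fintype.card ((Set.range c)ᶜ : Set (Fin n)) = r := by
    rw [Fintype.card_compl_set, Set.card_range_of_injective hc]
    simp
    omega
  let e2 : Fin r ≃ ((Set.range c)ᶜ : Set (Fin n)) := (Fintype.equivFinOfCardEq hcard).symm
  refine ⟨(Equiv.sumCongr (Equiv.ofInjective c hc) e2).trans (Equiv.Set.sumCompl (Set.range c)),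
    fun j => ?_⟩
  simp

set_option maxHeartbeats 2000000 in
theorem RC_final {k g : Type*} [Field k] [IsAlgClosed k] [CharZero k] [LieRing g]
    [LieAlgebra k g] [FiniteDimensional k g]
    (hred : LieAlgebra.radical k g = LieAlgebra.center k g) (r : ℕ)
    (hge : ∀ x, r ≤ finrank k (LinearMap.ker (LieAlgebra.ad k g x)))
    (hex : ∃ h, finrank k (LinearMap.ker (LieAlgebra.ad k g h)) = r) :
    ∃ (δ : g → k) (X : (Fin (finrank k g + r) → k) →ₗ[k] g)
      (f : g × g →ₗ[k] (Fin (finrank k g + r) → k)) (e : (Fin (finrank k g + r) → k) → g × g),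
      δ ∈ RCP k g ∧ (∃ h, δ h ≠ 0) ∧
      (∀ x z, z ∈ LieAlgebra.center k g → δ (x + z) = δ x) ∧
      Function.Surjective X ∧
      (∀ z, X (f z) = z.1) ∧
      (∀ w, δ (X w) ≠ 0 → f (e w) = w ∧ (e w).1 = X w ∧ ⁅(e w).1, (e w).2⁆ = 0) ∧
      (∀ x y y', δ x ≠ 0 → ⁅x, y⁆ = 0 → ⁅x, y'⁆ = 0 → f (x, y) = f (x, y') → y = y') ∧
      ∀ ℓ : g × g →ₗ[k] k, ∃ P ∈ RCP k (Fin (finrank k g + r) → k),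
        ∀ w, δ (X w) ≠ 0 → ℓ (e w) = P w / δ (X w) := by
  classical
  obtain ⟨h, hh⟩ := hex
  have hrn : r ≤ finrank k g := hh ▸ Submodule.finrank_le _
  obtain ⟨m, hm⟩ := Nat.exists_eq_add_of_le hrn
  let b := finBasis k g
  obtain ⟨a, c, hac⟩ := RC_lin_minor b (LieAlgebra.ad k g h) m (by rw [hh, hm])
  have hcinj : Function.Injective c := by
    intro i j hij
    by_contra hne
    exact hac (Matrix.det_zero_of_column_eq hne fun l => by simp [hij])
  obtain ⟨E, hE⟩ := RC_extend hm.symm c hcinj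
  let B : Basis (Fin m ⊕ Fin r) k g := b.reindex E.symm
  have hB : ∀ j, B (Sum.inl j) = b (c j) := fun j => by simp [B, hE]
  let N : g → Matrix (Fin m) (Fin m) k := fun x =>
    Matrix.of fun i j => b.repr ⁅x, B (Sum.inl j)⁆ (a i)
  let δ : g → k := fun x => (N x).det
  have hNP : ∀ i j, (fun x => N x i j) ∈ RCP k g := fun i j => RC_P_ad b _ _
  have hδP : δ ∈ RCP k g := RC_P_det _ hNP
  have hδh : δ h ≠ 0 := by
    simp only [δ, N, hB]
    exact hac
  let X : (Fin (finrank k g + r) → k) →ₗ[k] g :=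
    b.equivFun.symm.toLinearMap ∘ₗ LinearMap.funLeft k k (Fin.castAdd r)
  let Y : (Fin (finrank k g + r) → k) →ₗ[k] g :=
    B.equivFun.symm.toLinearMap ∘ₗ
      LinearMap.pi (Sum.elim (fun _ => 0) fun s => LinearMap.proj (Fin.natAdd (finrank k g) s))
  have hXr : ∀ w i, b.repr (X w) i = w (Fin.castAdd r i) := fun w i =>
    congrFun (b.equivFun.apply_symm_apply (fun i => w (Fin.castAdd r i))) i
  have hYr : ∀ w s, B.repr (Y w) (Sum.inr s) = w (Fin.natAdd _ s) := fun w s =>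
    congrFun (B.equivFun.apply_symm_apply _) (Sum.inr s)
  let f : g × g →ₗ[k] (Fin (finrank k g + r) → k) :=
    LinearMap.pi (Fin.addCases (fun i => b.coord i ∘ₗ LinearMap.fst k g g)
      (fun s => B.coord (Sum.inr s) ∘ₗ LinearMap.snd k g g))
  have hf1 : ∀ z i, f z (Fin.castAdd r i) = b.repr z.1 i := by
    intro z i
    simp [f]
  have hf2 : ∀ z s, f z (Fin.natAdd _ s) = B.repr z.2 (Sum.inr s) := by
    intro z s
    simp [f]
  let q : (Fin (finrank k g + r) → k) → Fin m → k := fun w i => b.repr ⁅X w, Y w⁆ (a i)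
  let u : (Fin (finrank k g + r) → k) → g := fun w =>
    ∑ j, ((N (X w)).cramer (q w) j) • B (Sum.inl j)
  let e : (Fin (finrank k g + r) → k) → g × g := fun w => (X w, Y w - (δ (X w))⁻¹ • u w)
  have hker : ∀ x y, δ x ≠ 0 → (∀ i, b.repr ⁅x, y⁆ (a i) = 0) → ⁅x, y⁆ = 0 := by
    intro x y hx hy
    let S : Submodule k g := ⨅ i, LinearMap.ker (b.coord (a i) ∘ₗ (LieAlgebra.ad k g x))
    have h1 := RC_ker_minor (fun i => b.coord (a i) ∘ₗ (LieAlgebra.ad k g x))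
      (fun j => B (Sum.inl j)) hx S
      (fun z hz i => (Submodule.mem_iInf _).1 hz i)
    have h2 : LinearMap.ker (LieAlgebra.ad k g x) ≤ S := by
      intro z hz
      refine (Submodule.mem_iInf _).2 fun i => ?_
      rw [LinearMap.mem_ker, LinearMap.comp_apply, LinearMap.mem_ker.1 hz, map_zero]
    have h3 := Submodule.eq_of_le_of_finrank_le h2 (by have := hge x; omega)
    have h4 : y ∈ S := (Submodule.mem_iInf _).2 fun i => hy i
    rw [← h3] at h4
    exact h4
  have hlin : ∀ x (v : Fin m → k) i,
      b.repr ⁅x, ∑ j, v j • B (Sum.inl j)⁆ (a i) = (N x).mulVec v i := by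
    intro x v i
    simp only [lie_sum, lie_smul, map_sum, map_smul, Finsupp.finset_sum_apply,
      Finsupp.smul_apply, smul_eq_mul, Matrix.mulVec, dotProduct]
    exact Finset.sum_congr rfl fun _ _ => mul_comm _ _
  have hur : ∀ w s, B.repr (u w) (Sum.inr s) = 0 := by
    intro w s
    simp [u, Finsupp.finset_sum_apply, Finsupp.single_apply]
  have hul : ∀ w i, b.repr ⁅X w, u w⁆ (a i) = δ (X w) * q w i := by
    intro w i
    have := congrFun (Matrix.mulVec_cramer (N (X w)) (q w)) i
    rw [Pi.smul_apply, smul_eq_mul] at this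
    change _ = (N (X w)).det * q w i
    rw [← this]
    exact hlin _ _ _
  refine ⟨δ, X, f, e, hδP, ⟨h, hδh⟩, ?_, ?_, ?_, ?_, ?_, ?_⟩
  · intro x z hz
    simp only [δ, N, add_lie, (RC_mem_center k g z).1 hz, add_zero]
  · exact b.equivFun.symm.surjective.comp
      (LinearMap.funLeft_surjective_of_injective k k _ (Fin.castAdd_injective _ r))
  · intro z
    apply b.repr.injective
    ext i
    rw [hXr, hf1]
  · intro w hw
    refine ⟨?_, rfl, ?_⟩
    · ext i
      induction i using Fin.addCases with
      | left i => rw [hf1, ← hXr w i]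
      | right s => rw [hf2, ← hYr w s]; simp [e, hur]
    · apply hker _ _ hw
      intro i
      change b.repr ⁅X w, Y w - (δ (X w))⁻¹ • u w⁆ (a i) = 0
      rw [lie_sub, lie_smul, map_sub, map_smul, Finsupp.sub_apply, Finsupp.smul_apply, hul,
        smul_eq_mul, inv_mul_cancel_left₀ hw]
      exact sub_self _
  · intro x y y' hx hy hy' hff
    rw [← sub_eq_zero]
    have hr : ∀ s, B.repr (y - y') (Sum.inr s) = 0 := by
      intro s
      have := congrFun hff (Fin.natAdd _ s)
      rw [hf2, hf2] at this
      simpa [sub_eq_zero] using this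
    have hsum : y - y' = ∑ j, B.repr (y - y') (Sum.inl j) • B (Sum.inl j) := by
      conv_lhs => rw [← B.sum_repr (y - y')]
      rw [Fintype.sum_sum_type]
      simp only [hr, zero_smul, Finset.sum_const_zero, add_zero]
    have hz : ⁅x, y - y'⁆ = 0 := by rw [lie_sub, hy, hy', sub_zero]
    have hN : (N x).mulVec (fun j => B.repr (y - y') (Sum.inl j)) = 0 := by
      ext i
      have h1 : b.repr ⁅x, y - y'⁆ (a i) = 0 := by rw [hz]; simp
      rw [hsum, hlin] at h1
      exact h1
    have h0 := Matrix.eq_zero_of_mulVec_eq_zero hx hN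
    rw [hsum]
    exact Finset.sum_eq_zero fun j _ => by rw [show B.repr (y - y') (Sum.inl j) = 0 from
      congrFun h0 j, zero_smul]
  · intro ℓ
    have hXP : ∀ p ∈ RCP k g, (fun w => p (X w)) ∈ RCP k (Fin (finrank k g + r) → k) :=
      fun p hp => RC_P_comp X (fun l => RC_P_lin (l ∘ₗ X)) p hp
    have hqP : ∀ i, (fun w => q w i) ∈ RCP k (Fin (finrank k g + r) → k) := by
      intro i
      have : (fun w => q w i) = fun w => ∑ s, b.repr ⁅X w, B s⁆ (a i) * B.repr (Y w) s := by
        ext w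
        simp only [q]
        conv_lhs => rw [← B.sum_repr (Y w)]
        simp only [lie_sum, lie_smul, map_sum, map_smul, Finsupp.finset_sum_apply,
          Finsupp.smul_apply, smul_eq_mul]
        exact Finset.sum_congr rfl fun _ _ => mul_comm _ _
      rw [this]
      exact RC_P_sum _ _ fun s _ => Subalgebra.mul_mem _ (hXP _ (RC_P_ad b (B s) (a i)))
        (RC_P_lin (B.coord s ∘ₗ Y))
    have hcP : ∀ j, (fun w => (N (X w)).cramer (q w) j) ∈ RCP k (Fin (finrank k g + r) → k) := by
      intro j
      simp only [Matrix.cramer_apply]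
      apply RC_P_det
      intro i l
      by_cases hlj : l = j
      · subst hlj
        simpa [Matrix.updateCol_apply] using hqP i
      · simpa [Matrix.updateCol_apply, hlj] using hXP _ (hNP i l)
    refine ⟨fun w => δ (X w) * ℓ (X w, Y w) +
      (∑ j, (N (X w)).cramer (q w) j * ℓ (0, - B (Sum.inl j))), ?_, ?_⟩
    · apply Subalgebra.add_mem _ (Subalgebra.mul_mem _ (hXP _ hδP)
        (RC_P_lin (ℓ ∘ₗ (X.prod Y)))) (RC_P_sum _ _ fun j _ =>
          Subalgebra.mul_mem _ (hcP j) (Subalgebra.algebraMap_mem _ _))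
    · intro w hw
      have he : e w = (X w, Y w) + (δ (X w))⁻¹ •
          ∑ j, ((N (X w)).cramer (q w) j) • ((0, - B (Sum.inl j)) : g × g) := by
        ext
        · simp [e, Prod.fst_sum]
        · simp [e, u, Prod.snd_sum, sub_eq_add_neg]
      rw [he]
      simp only [map_add, map_smul, map_sum, smul_eq_mul]
      field_simp

end

variable (k : Type*) [Field k] [IsAlgClosed k] [CharZero k]
variable (g : Type*) [LieRing g] [LieAlgebra k g] [FiniteDimensional k g]

/-- The commuting variety `C` is rational:  there are a dense open subset
`U` of `C`, a dense open subset `V` of the affine space `A^{dim g + rk g}`, and an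
isomorphism of varieties `U ≅ V`, i.e. a bijection `f : U → V` such that `f` and its
inverse `e` are regular maps (each coordinate is given on `U`, resp. `V`, by a quotient of
polynomial functions whose denominator does not vanish there). -/
theorem commuting_variety_rational
    (hred : LieAlgebra.radical k g = LieAlgebra.center k g) (hnc : ¬IsLieAbelian g)
    (t : LieSubalgebra k g) (ht : t.IsCartanSubalgebra) :
    ∃ (U : Set (g × g)) (W : Set (Fin (Module.finrank k g + Module.finrank k ↥t) → k))
      (f : g × g → (Fin (Module.finrank k g + Module.finrank k ↥t) → k))
      (e : (Fin (Module.finrank k g + Module.finrank k ↥t) → k) → g × g),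
      -- `U` is a dense open subset of `C`
      U ⊆ commSet k g ∧
      (∃ O : Set (g × g), @IsOpen (g × g) (CV.zar k (g × g)) O ∧ U = O ∩ commSet k g) ∧
      commSet k g ⊆ @closure (g × g) (CV.zar k (g × g)) U ∧
      -- `W` is a dense open subset of affine space `A^{dim g + rk g}`
      @IsOpen _ (CV.zar k (Fin (Module.finrank k g + Module.finrank k ↥t) → k)) W ∧
      @Dense _ (CV.zar k (Fin (Module.finrank k g + Module.finrank k ↥t) → k)) W ∧
      -- `f : U → W` is a bijection with inverse `e`
      Set.BijOn f U W ∧ (∀ z ∈ U, e (f z) = z) ∧ (∀ w ∈ W, f (e w) = w) ∧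
      -- `f` is regular on `U`
      (∃ (p : Fin (Module.finrank k g + Module.finrank k ↥t) →
            MvPolynomial (Module.Free.ChooseBasisIndex k (g × g)) k)
         (q : MvPolynomial (Module.Free.ChooseBasisIndex k (g × g)) k),
         (∀ z ∈ U, CV.evalP k (g × g) q z ≠ 0) ∧
         ∀ z ∈ U, ∀ j, f z j = CV.evalP k (g × g) (p j) z / CV.evalP k (g × g) q z) ∧
      -- `e` is regular on `W`
      (∃ (P : Module.Free.ChooseBasisIndex k (g × g) →
            MvPolynomial
              (Module.Free.ChooseBasisIndex k
                (Fin (Module.finrank k g + Module.finrank k ↥t) → k)) k)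
         (Q : MvPolynomial
              (Module.Free.ChooseBasisIndex k
                (Fin (Module.finrank k g + Module.finrank k ↥t) → k)) k),
         (∀ w ∈ W, CV.evalP k _ Q w ≠ 0) ∧
         ∀ w ∈ W, ∀ i, CV.coordFn k (g × g) (e w) i
            = CV.evalP k _ (P i) w / CV.evalP k _ Q w) := by
  classical
  obtain ⟨hge, hex⟩ := RC_red_rank hred t ht
  obtain ⟨δ, X, f, e, hδ, hδ0, hinv, hX, hXf, hfe, hinj, he⟩ := RC_final hred _ hge hex
  have hφ1 : (fun z : g × g => δ z.1) ∈ RCP k (g × g) :=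
    RC_P_comp Prod.fst (fun l => RC_P_lin (l ∘ₗ LinearMap.fst k g g)) δ hδ
  have hφ2 : (fun w => δ (X w)) ∈ RCP k (Fin (Module.finrank k g + Module.finrank k ↥t) → k) :=
    RC_P_comp X (fun l => RC_P_lin (l ∘ₗ X)) δ hδ
  have hef : ∀ z ∈ {z : g × g | δ z.1 ≠ 0} ∩ commSet k g, e (f z) = z := by
    rintro ⟨x, y⟩ ⟨hz1, hz2⟩
    have hXz : X (f (x, y)) = x := hXf (x, y)
    obtain ⟨h1, h2, h3⟩ := hfe (f (x, y)) (by rw [hXz]; exact hz1)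
    rw [hXz] at h2
    rw [h2] at h3
    have h4 : e (f (x, y)) = (x, (e (f (x, y))).2) := Prod.ext h2 rfl
    have h5 := hinj x _ y hz1 h3 hz2 (by rw [← h4, h1])
    rw [h4, h5]
  have hmaps : Set.MapsTo f ({z : g × g | δ z.1 ≠ 0} ∩ commSet k g) {w | δ (X w) ≠ 0} := by
    intro z hz
    change δ (X (f z)) ≠ 0
    rw [hXf]
    exact hz.1
  have hmaps' : Set.MapsTo e {w | δ (X w) ≠ 0} ({z : g × g | δ z.1 ≠ 0} ∩ commSet k g) := by
    intro w hw
    obtain ⟨_, h2, h3⟩ := hfe w hw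
    refine ⟨?_, h3⟩
    change δ (e w).1 ≠ 0
    rw [h2]
    exact hw
  have hfe' : ∀ w ∈ {w | δ (X w) ≠ 0}, f (e w) = w := fun w hw => (hfe w hw).1
  refine ⟨{z | δ z.1 ≠ 0} ∩ commSet k g, {w | δ (X w) ≠ 0}, f, e, Set.inter_subset_right,
    ⟨_, RC_zar_isOpen _ hφ1, rfl⟩, ?_, RC_zar_isOpen _ hφ2, ?_, ?_, hef, hfe', ?_, ?_⟩
  · intro z hz
    rw [@mem_closure_iff _ (CV.zar k (g × g))]
    intro O hO hzO
    obtain ⟨φ, hφ, hφz, hφO⟩ := RC_zar_nhd O hO z hzO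
    by_contra hcon
    apply hφz
    refine RC_red_density hred δ hδ hδ0 hinv φ hφ ?_ z.1 z.2 hz
    intro x y hxy hx
    by_contra hne
    exact hcon ⟨(x, y), hφO _ hne, hx, hxy⟩
  · intro w
    rw [@mem_closure_iff _ (CV.zar k _)]
    intro O hO hwO
    obtain ⟨φ, hφ, hφz, hφO⟩ := RC_zar_nhd O hO w hwO
    obtain ⟨v, hv1, hv2⟩ := RC_P_mul_ne φ (fun w => δ (X w)) hφ hφ2 ⟨w, hφz⟩ (by
      obtain ⟨h, hh⟩ := hδ0
      obtain ⟨v, rfl⟩ := hX h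
      exact ⟨v, hh⟩)
    exact ⟨v, hφO v hv1, hv2⟩
  · exact Set.InvOn.bijOn ⟨hef, hfe'⟩ hmaps hmaps'
  · have hp : ∀ j, ∃ F, ∀ z, f z j = CV.evalP k (g × g) F z := fun j =>
      (RC_evalP_iff _).1 (RC_P_lin (LinearMap.proj j ∘ₗ f))
    choose p hp using hp
    obtain ⟨q, hq⟩ := (RC_evalP_iff (1 : g × g → k)).1 (RCP k (g × g)).one_mem
    refine ⟨p, q, fun z _ => ?_, fun z _ j => ?_⟩
    · rw [← hq]; exact one_ne_zero
    · rw [← hq, ← hp]; exact (div_one _).symm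
  · have hP : ∀ i, ∃ F, ∀ w, δ (X w) ≠ 0 →
        CV.coordFn k (g × g) (e w) i = CV.evalP k _ F w / δ (X w) := by
      intro i
      obtain ⟨P, hP, hPe⟩ := he ((Module.Free.chooseBasis k (g × g)).coord i)
      obtain ⟨F, hF⟩ := (RC_evalP_iff P).1 hP
      exact ⟨F, fun w hw => by rw [← hF]; exact hPe w hw⟩
    choose P hP using hP
    obtain ⟨Q, hQ⟩ := (RC_evalP_iff _).1 hφ2
    refine ⟨P, Q, fun w hw => ?_, fun w hw i => ?_⟩
    · rw [← hQ]; exact hw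
    · rw [← hQ]; exact hP i w hw
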